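/- Let (ρ, u, B) be a smooth solution of the isentropic compressible MHD system with Navier-slip boundary conditions on Ω, and set u̇ = u_t + u·∇u. Then for every p ∈ [1,∞) there is a constant C depending only on p and Ω such that: (i) ‖u̇‖_{L^p} ≤ C(‖∇u̇‖_{L²} + ‖∇u‖²_{L²}); and (ii) ‖∇u̇‖_{L²} ≤ C(‖div u̇‖_{L²} + ‖curl u̇‖_{L²} + ‖∇u‖²_{L⁴}). -/

import Mathlib

noncomputable section

open MeasureTheory Real Set Filter Topology Bornology

/-- Points of the plane (with an equivalent norm to the Euclidean one). -/
abbrev V2 := Fin 2 → ℝ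

namespace MHD

/-- `i`-th partial derivative of a scalar field. -/
def pd (i : Fin 2) (f : V2 → ℝ) (x : V2) : ℝ :=
  fderiv ℝ f x (Pi.single i 1)

/-- Gradient of a scalar field. -/
def grad (f : V2 → ℝ) (x : V2) : V2 := fun i => pd i f x

/-- Divergence of a planar vector field. -/
def div2 (u : V2 → V2) (x : V2) : ℝ := ∑ i, pd i (fun y => u y i) x

/-- (Scalar) curl of a planar vector field. -/
def curl2 (u : V2 → V2) (x : V2) : ℝ :=
  pd 0 (fun y => u y 1) x - pd 1 (fun y => u y 0) x

/-- Laplacian of a scalar field. -/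
def lap (f : V2 → ℝ) (x : V2) : ℝ := ∑ j, pd j (pd j f) x

/-- Euclidean inner product on the plane. -/
def dot (a b : V2) : ℝ := ∑ i, a i * b i

/-- Squared Euclidean norm on the plane. -/
def nsq (a : V2) : ℝ := ∑ i, (a i) ^ 2

/-- Rotation by -90 degrees : `perp (n¹,n²) = (n²,−n¹)`. -/
def perp (v : V2) : V2 := ![v 1, -(v 0)]

/-- Squared Frobenius norm of the spatial gradient of a vector field. -/
def gnsq (u : V2 → V2) (x : V2) : ℝ := ∑ i, ∑ j, (pd j (fun y => u y i) x) ^ 2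

/-- Squared Frobenius norm of the second spatial gradient of a vector field. -/
def g2nsq (u : V2 → V2) (x : V2) : ℝ :=
  ∑ i, ∑ j, ∑ k, (pd k (fun y => pd j (fun z => u z i) y) x) ^ 2

/-- `Lᵖ(Ω)` norm of a scalar field. -/
def LpS (p : ℝ) (Ω : Set V2) (f : V2 → ℝ) : ℝ :=
  (∫ x in Ω, |f x| ^ p) ^ (1 / p)

/-- `Lᵖ(Ω)` norm of a vector field (Euclidean norm pointwise). -/
def LpV (p : ℝ) (Ω : Set V2) (u : V2 → V2) : ℝ :=
  (∫ x in Ω, (nsq (u x)) ^ (p / 2)) ^ (1 / p)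

/-- `Lᵖ(Ω)` norm of the gradient of a vector field. -/
def LpG (p : ℝ) (Ω : Set V2) (u : V2 → V2) : ℝ :=
  (∫ x in Ω, (gnsq u x) ^ (p / 2)) ^ (1 / p)

/-- `Lᵖ(Ω)` norm of the second gradient of a vector field. -/
def LpG2 (p : ℝ) (Ω : Set V2) (u : V2 → V2) : ℝ :=
  (∫ x in Ω, (g2nsq u x) ^ (p / 2)) ^ (1 / p)

/-- Average of a scalar field over `Ω`. -/
def avg (Ω : Set V2) (f : V2 → ℝ) : ℝ := (∫ x in Ω, f x) / (volume Ω).toReal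

/-- Time derivative of a time dependent scalar field. -/
def dt (f : ℝ → V2 → ℝ) (t : ℝ) (x : V2) : ℝ := deriv (fun s => f s x) t

/-- Time derivative of a time dependent vector field. -/
def dtV (u : ℝ → V2 → V2) (t : ℝ) (x : V2) : V2 := fun i => dt (fun s y => u s y i) t x

/-- Material derivative `u̇ = u_t + (u·∇)u` of the velocity field itself. -/
def matD (u : ℝ → V2 → V2) (t : ℝ) (x : V2) : V2 := fun i =>
  dt (fun s y => u s y i) t x + dot (u t x) (grad (fun y => u t y i) x)

/-- The material derivative `(div u)· = (div u)_t + u·∇ div u`. -/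
def divdot (u : ℝ → V2 → V2) (t : ℝ) (x : V2) : ℝ :=
  deriv (fun s => div2 (u s) x) t + dot (u t x) (grad (fun y => div2 (u t) y) x)

/-- Average pressure `P̄` at time `t`. -/
def Pbar (Ω : Set V2) (a γ : ℝ) (ρ : ℝ → V2 → ℝ) (t : ℝ) : ℝ :=
  avg Ω (fun x => a * ρ t x ^ γ)

/-- Effective viscous flux `F = (2μ+λ) div u − (P − P̄) − |B|²/2`. -/
def Fflux (Ω : Set V2) (a γ μ lam : ℝ) (ρ : ℝ → V2 → ℝ) (u B : ℝ → V2 → V2)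
    (t : ℝ) (x : V2) : ℝ :=
  (2 * μ + lam) * div2 (u t) x - (a * ρ t x ^ γ - Pbar Ω a γ ρ t) - nsq (B t x) / 2

/-- Potential energy density `G(ρ)`. -/
def Gpot (a γ ρb : ℝ) (r : ℝ) : ℝ :=
  r * ∫ ξ in ρb..r, (a * ξ ^ γ - a * ρb ^ γ) / ξ ^ 2

/-- Initial total energy `C₀`. -/
def C0 (Ω : Set V2) (a γ : ℝ) (ρ₀ : V2 → ℝ) (u₀ B₀ : V2 → V2) : ℝ :=
  ∫ x in Ω, (ρ₀ x * nsq (u₀ x) / 2 + nsq (B₀ x) / 2 + Gpot a γ (avg Ω ρ₀) (ρ₀ x))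

/-- The time weight `σ(t) = min{1,t}`. -/
def tw (t : ℝ) : ℝ := min 1 t

/-- Smoothness (in time and space) of a time dependent scalar field. -/
def Smooth2 (f : ℝ → V2 → ℝ) : Prop := ContDiff ℝ (⊤ : ℕ∞) (fun p : ℝ × V2 => f p.1 p.2)

/-- Smoothness (in time and space) of a time dependent vector field. -/
def Smooth2V (u : ℝ → V2 → V2) : Prop := ∀ i, Smooth2 (fun t x => u t x i)

/-- A bounded domain with smooth boundary, given by a smooth defining function `φ`,
with outward unit normal `n` on the boundary. -/
structure SmoothDomain (Ω : Set V2) (n : V2 → V2) : Prop where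
  nonempty : Ω.Nonempty
  bounded : IsBounded Ω
  defining : ∃ φ : V2 → ℝ, ContDiff ℝ (⊤ : ℕ∞) φ ∧ Ω = {x | φ x < 0} ∧
      frontier Ω = {x | φ x = 0} ∧
      (∀ x ∈ frontier Ω, grad φ x ≠ 0) ∧
      (∀ x ∈ frontier Ω, n x = (Real.sqrt (nsq (grad φ x)))⁻¹ • grad φ x)

/-- Outward unit normal on the boundary of a convex domain, characterized by the
supporting hyperplane property. -/
def ConvexOuterNormal (Ω : Set V2) (n : V2 → V2) : Prop :=
  ∀ x ∈ frontier Ω, nsq (n x) = 1 ∧ ∀ y ∈ closure Ω, dot (n x) (y - x) ≤ 0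

/-- Membership in `H¹(Ω)` for (a smooth representative of) a vector field. -/
def InH1V (Ω : Set V2) (f : V2 → V2) : Prop :=
  (∀ i, Differentiable ℝ fun x => f x i) ∧
  IntegrableOn (fun x => nsq (f x)) Ω volume ∧ IntegrableOn (fun x => gnsq f x) Ω volume

/-- Classical (pointwise) solution of the isentropic compressible MHD system with
Navier-slip boundary conditions, for times in the set `I`. -/
structure IsMHDSol (Ω : Set V2) (n : V2 → V2) (a γ μ lam ν : ℝ) (I : Set ℝ)
    (ρ : ℝ → V2 → ℝ) (u B : ℝ → V2 → V2) : Prop where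
  mass : ∀ t ∈ I, ∀ x ∈ Ω,
    dt ρ t x + div2 (fun y j => ρ t y * u t y j) x = 0
  momentum : ∀ t ∈ I, ∀ x ∈ Ω, ∀ i,
    dt (fun s y => ρ s y * u s y i) t x
      + (∑ j, pd j (fun y => ρ t y * u t y i * u t y j) x)
      + pd i (fun y => a * ρ t y ^ γ) x
    = μ * lap (fun y => u t y i) x
      + (μ + lam) * pd i (fun y => div2 (u t) y) x
      + dot (B t x) (grad (fun y => B t y i) x)
      - pd i (fun y => nsq (B t y)) x / 2
  magnetic : ∀ t ∈ I, ∀ x ∈ Ω, ∀ i,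
    dt (fun s y => B s y i) t x + dot (u t x) (grad (fun y => B t y i) x)
      - dot (B t x) (grad (fun y => u t y i) x) + B t x i * div2 (u t) x
    = ν * lap (fun y => B t y i) x
  divB : ∀ t ∈ I, ∀ x ∈ Ω, div2 (B t) x = 0
  slipU : ∀ t ∈ I, ∀ x ∈ frontier Ω, dot (u t x) (n x) = 0 ∧ curl2 (u t) x = 0
  slipB : ∀ t ∈ I, ∀ x ∈ frontier Ω, dot (B t x) (n x) = 0 ∧ curl2 (B t) x = 0


section Aux

open scoped ENNReal

/-- smooth scalar functions on the plane -/
abbrev Sm (f : V2 → ℝ) : Prop := ContDiff ℝ (⊤ : ℕ∞) f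

lemma Sm.diff {f : V2 → ℝ} (hf : Sm f) : Differentiable ℝ f :=
  hf.differentiable (by simp)

lemma Sm.pd {f : V2 → ℝ} (hf : Sm f) (i : Fin 2) : Sm (pd i f) := by
  unfold MHD.pd
  exact (hf.fderiv_right (m := (⊤ : ℕ∞)) (by simp)).clm_apply contDiff_const

lemma Sm.cont {f : V2 → ℝ} (hf : Sm f) : Continuous f := hf.diff.continuous

lemma Sm.mul {f g : V2 → ℝ} (hf : Sm f) (hg : Sm g) : Sm (fun x => f x * g x) :=
  ContDiff.mul hf hg

lemma Sm.add {f g : V2 → ℝ} (hf : Sm f) (hg : Sm g) : Sm (fun x => f x + g x) :=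
  ContDiff.add hf hg

lemma Sm.sub {f g : V2 → ℝ} (hf : Sm f) (hg : Sm g) : Sm (fun x => f x - g x) :=
  ContDiff.sub hf hg

lemma Sm.neg {f : V2 → ℝ} (hf : Sm f) : Sm (fun x => - f x) :=
  ContDiff.neg hf

lemma sm_coord (i : Fin 2) : Sm (fun x : V2 => x i) := contDiff_apply ℝ ℝ i

lemma pd_add {f g : V2 → ℝ} (hf : Differentiable ℝ f) (hg : Differentiable ℝ g) (i : Fin 2)
    (x : V2) : pd i (fun y => f y + g y) x = pd i f x + pd i g x := by
  unfold pd
  rw [fderiv_fun_add (hf x) (hg x)]; rfl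

lemma pd_sub {f g : V2 → ℝ} (hf : Differentiable ℝ f) (hg : Differentiable ℝ g) (i : Fin 2)
    (x : V2) : pd i (fun y => f y - g y) x = pd i f x - pd i g x := by
  unfold pd
  rw [fderiv_fun_sub (hf x) (hg x)]; rfl

lemma pd_neg {f : V2 → ℝ} (i : Fin 2)
    (x : V2) : pd i (fun y => - f y) x = - pd i f x := by
  unfold pd
  rw [fderiv_fun_neg]; rfl

lemma pd_mul {f g : V2 → ℝ} (hf : Differentiable ℝ f) (hg : Differentiable ℝ g) (i : Fin 2)
    (x : V2) : pd i (fun y => f y * g y) x = pd i f x * g x + f x * pd i g x := by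
  unfold pd
  rw [fderiv_fun_mul (hf x) (hg x)]
  simp; ring

lemma pd_coord (i j : Fin 2) (x : V2) : pd i (fun y => y j) x = if i = j then 1 else 0 := by
  unfold pd
  rw [show (fun y : V2 => y j) = (ContinuousLinearMap.proj (R := ℝ) (φ := fun _ : Fin 2 => ℝ) j) from rfl]
  rw [ContinuousLinearMap.fderiv]
  simp [Pi.single_apply, eq_comm]

lemma fderiv_eq (f : V2 → ℝ) (x v : V2) :
    fderiv ℝ f x v = v 0 * pd 0 f x + v 1 * pd 1 f x := by
  have : v = v 0 • (Pi.single 0 1 : V2) + v 1 • (Pi.single 1 1 : V2) := by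
    ext i; fin_cases i <;> simp
  conv_lhs => rw [this]
  rw [map_add, map_smul, map_smul]
  simp [pd]

lemma pd_comm {f : V2 → ℝ} (hf : Sm f) (i j : Fin 2) (x : V2) :
    pd i (pd j f) x = pd j (pd i f) x := by
  have h := (hf.contDiffAt (x := x)).isSymmSndFDerivAt (n := (⊤ : ℕ∞)) (by
    rw [minSmoothness_of_isRCLikeNormedField]
    exact WithTop.coe_le_coe.2 (le_top : (2 : ℕ∞) ≤ ⊤))
  have key : ∀ i j : Fin 2, pd i (pd j f) x
      = fderiv ℝ (fderiv ℝ f) x (Pi.single i 1) (Pi.single j 1) := by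
    intro i j
    have hd : DifferentiableAt ℝ (fderiv ℝ f) x :=
      ((hf.fderiv_right (m := (⊤ : ℕ∞)) (by simp)).differentiable (by simp)) x
    have : pd j f = fun y => (fderiv ℝ f y) (Pi.single j 1) := rfl
    unfold pd
    rw [fderiv_clm_apply hd (differentiableAt_const _)]
    simp
  rw [key, key]
  exact h _ _

/-- integral of a derivative of a compactly supported function -/
lemma integral_pd_zero {F : V2 → ℝ} (hF : Sm F) (hc : HasCompactSupport F) (i : Fin 2) :
    ∫ x, pd i F x = 0 := by
  have hi : Integrable (pd i F) := by
    apply (hF.pd i).cont.integrable_of_hasCompactSupport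
    have := hc.fderiv (𝕜 := ℝ)
    exact this.comp_left (g := fun L : V2 →L[ℝ] ℝ => L (Pi.single i 1)) (by simp)
  have h := integral_mul_fderiv_eq_neg_fderiv_mul_of_integrable (μ := (volume : Measure V2))
    (f := fun _ : V2 => (1:ℝ)) (g := F) (v := Pi.single i 1) (by simp)
    (by simp only [one_mul]; exact hi)
    (by simpa using hF.cont.integrable_of_hasCompactSupport hc) (by simp)
    (fun x _ => hF.diff x)
  simpa [pd] using h

/-- data of a defining function -/
structure Dfn (Ω : Set V2) (φ : V2 → ℝ) : Prop where
  bdd : IsBounded Ω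
  sm : Sm φ
  eq : Ω = {x | φ x < 0}
  fr : frontier Ω = {x | φ x = 0}
  ne : ∀ x ∈ frontier Ω, grad φ x ≠ 0

namespace Dfn

lemma isOpen {Ω : Set V2} {φ : V2 → ℝ} (h : Dfn Ω φ) : IsOpen Ω := by
  rw [h.eq]; exact isOpen_lt h.sm.cont continuous_const

lemma meas {Ω : Set V2} {φ : V2 → ℝ} (h : Dfn Ω φ) : MeasurableSet Ω := h.isOpen.measurableSet

lemma closure_eq {Ω : Set V2} {φ : V2 → ℝ} (h : Dfn Ω φ) : closure Ω = {x | φ x ≤ 0} := by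
  rw [closure_eq_self_union_frontier, h.fr]
  conv_lhs => rw [h.eq]
  ext x; simp [le_iff_lt_or_eq]

lemma compact {Ω : Set V2} {φ : V2 → ℝ} (h : Dfn Ω φ) : IsCompact (closure Ω) := h.bdd.isCompact_closure

lemma vol_lt {Ω : Set V2} {φ : V2 → ℝ} (h : Dfn Ω φ) : volume Ω < ⊤ := h.bdd.measure_lt_top

lemma intOn {Ω : Set V2} {φ : V2 → ℝ} (h : Dfn Ω φ) {f : V2 → ℝ} (hf : Continuous f) : IntegrableOn f Ω :=
  (hf.continuousOn.integrableOn_compact h.compact).mono_set subset_closure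

lemma ibp {Ω : Set V2} {φ : V2 → ℝ} (h : Dfn Ω φ) {X : Fin 2 → V2 → ℝ} (hX : ∀ i, Sm (X i)) {ε : ℝ} (hε : 0 < ε)
    (hpos : ∀ x, -ε ≤ φ x → φ x ≤ 0 → 0 ≤ X 0 x * pd 0 φ x + X 1 x * pd 1 φ x) :
    0 ≤ ∫ x in Ω, smoothTransition (-(φ x) / ε) * (pd 0 (X 0) x + pd 1 (X 1) x) := by
  set ψ : V2 → ℝ := fun x => smoothTransition (-(φ x) / ε) with hψ
  have hψs : Sm ψ := Real.smoothTransition.contDiff.comp ((ContDiff.neg h.sm).div_const ε)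
  have hψ0 : ∀ x, x ∉ Ω → ψ x = 0 := by
    intro x hx
    apply smoothTransition.zero_of_nonpos
    rw [h.eq] at hx
    simp only [mem_ofPred_eq, not_lt] at hx
    exact div_nonpos_of_nonpos_of_nonneg (by linarith) hε.le
  have hψc : HasCompactSupport ψ := by
    apply HasCompactSupport.intro h.compact
    intro x hx
    exact hψ0 x (fun hh => hx (subset_closure hh))
  have hpdψ : ∀ i x, pd i ψ x = - (deriv smoothTransition (-(φ x) / ε) / ε) * pd i φ x := by
    intro i x
    have h1 : HasDerivAt smoothTransition (deriv smoothTransition (-(φ x) / ε)) (-(φ x) / ε) :=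
      ((smoothTransition.contDiff (n := (⊤ : ℕ∞))).differentiable (by simp) _).hasDerivAt
    have h2 : HasFDerivAt (fun x => -(φ x) / ε) ((1/ε) • (-(fderiv ℝ φ x))) x := by
      have := ((h.sm.diff x).hasFDerivAt.neg).const_mul (1/ε)
      refine this.congr_of_eventuallyEq (Eventually.of_forall fun y => ?_)
      simp; ring
    have h3 := h1.comp_hasFDerivAt x h2
    have : fderiv ℝ ψ x = _ := h3.fderiv
    unfold pd
    rw [this]
    simp; ring
  have hF : ∀ i, Sm (fun x => ψ x * X i x) := fun i => hψs.mul (hX i)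
  have hFc : ∀ i, HasCompactSupport (fun x => ψ x * X i x) := fun i => hψc.mul_right
  have hz := fun i => integral_pd_zero (hF i) (hFc i) i
  have hi : ∀ i, Integrable (fun x => pd i (fun x => ψ x * X i x) x) := by
    intro i
    apply ((hF i).pd i).cont.integrable_of_hasCompactSupport
    exact ((hFc i).fderiv (𝕜 := ℝ)).comp_left (g := fun L : V2 →L[ℝ] ℝ => L (Pi.single i 1)) (by simp)
  have hs : ∫ x, (pd 0 (fun x => ψ x * X 0 x) x + pd 1 (fun x => ψ x * X 1 x) x) = 0 := by
    rw [integral_add (hi 0) (hi 1), hz 0, hz 1, add_zero]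
  have hle : ∫ x, ψ x * (pd 0 (X 0) x + pd 1 (X 1) x) ≥ 0 := by
    rw [ge_iff_le, ← hs]
    apply integral_mono ((hi 0).add (hi 1))
    · apply Continuous.integrable_of_hasCompactSupport
      · exact hψs.cont.mul (((hX 0).pd 0).cont.add ((hX 1).pd 1).cont)
      · exact hψc.mul_right
    intro x
    simp only [Pi.add_apply]
    rw [pd_mul hψs.diff (hX 0).diff, pd_mul hψs.diff (hX 1).diff, hpdψ, hpdψ]
    have hd : 0 ≤ deriv smoothTransition (-(φ x) / ε) := smoothTransition.monotone.deriv_nonneg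
    have : 0 ≤ (deriv smoothTransition (-(φ x) / ε) / ε) * (X 0 x * pd 0 φ x + X 1 x * pd 1 φ x) := by
      by_cases hc : -ε ≤ φ x ∧ φ x ≤ 0
      · exact mul_nonneg (div_nonneg hd hε.le) (hpos x hc.1 hc.2)
      · have : deriv smoothTransition (-(φ x) / ε) = 0 := by
          rw [not_and_or] at hc
          rcases hc with hc | hc
          · have h1 : 1 < -(φ x) / ε := by rw [lt_div_iff₀ hε]; linarith
            have : smoothTransition =ᶠ[𝓝 (-(φ x) / ε)] fun _ => 1 := by
              filter_upwards [Ioi_mem_nhds h1] with y hy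
              exact smoothTransition.one_of_one_le (le_of_lt hy)
            rw [this.deriv_eq]; simp
          · have h1 : -(φ x) / ε < 0 := div_neg_of_neg_of_pos (by linarith) hε
            have : smoothTransition =ᶠ[𝓝 (-(φ x) / ε)] fun _ => 0 := by
              filter_upwards [Iio_mem_nhds h1] with y hy
              exact smoothTransition.zero_of_nonpos (le_of_lt hy)
            rw [this.deriv_eq]; simp
        rw [this]; simp
    nlinarith [this]
  rw [setIntegral_eq_integral_of_forall_compl_eq_zero]
  · exact hle
  · intro x hx; simp only [hψ] at hψ0; rw [hψ0 x hx, zero_mul]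

lemma div_nonneg_strict {Ω : Set V2} {φ : V2 → ℝ} (h : Dfn Ω φ) {X : Fin 2 → V2 → ℝ} (hX : ∀ i, Sm (X i))
    (hpos : ∀ x ∈ frontier Ω, 0 < X 0 x * pd 0 φ x + X 1 x * pd 1 φ x) :
    0 ≤ ∫ x in Ω, (pd 0 (X 0) x + pd 1 (X 1) x) := by
  have hcX : Continuous fun x => X 0 x * pd 0 φ x + X 1 x * pd 1 φ x :=
    ((hX 0).cont.mul (h.sm.pd 0).cont).add ((hX 1).cont.mul (h.sm.pd 1).cont)
  obtain ⟨c, hc, hcp⟩ : ∃ c > 0, ∀ x, -c ≤ φ x → φ x ≤ 0 →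
      0 ≤ X 0 x * pd 0 φ x + X 1 x * pd 1 φ x := by
    set S := closure Ω ∩ {x | X 0 x * pd 0 φ x + X 1 x * pd 1 φ x ≤ 0} with hS
    have hSc : IsCompact S := h.compact.inter_right (isClosed_le hcX continuous_const)
    rcases S.eq_empty_or_nonempty with he | hne
    · refine ⟨1, one_pos, fun x _ h2 => ?_⟩
      by_contra hcon
      have : x ∈ S := ⟨by rw [h.closure_eq]; exact h2, le_of_lt (not_le.1 hcon)⟩
      rw [he] at this; exact this
    · obtain ⟨z, hz, hmax⟩ := hSc.exists_isMaxOn hne h.sm.cont.continuousOn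
      have hz1 : φ z ≤ 0 := by have := hz.1; rwa [h.closure_eq] at this
      have hz0 : φ z < 0 := by
        rcases lt_or_eq_of_le hz1 with h1 | h1
        · exact h1
        · have := hpos z (by rw [h.fr]; exact h1)
          exact absurd hz.2 (not_le.2 this)
      refine ⟨-(φ z)/2, by linarith, fun x h1 h2 => ?_⟩
      by_contra hcon
      have hx : x ∈ S := ⟨by rw [h.closure_eq]; exact h2, le_of_lt (not_le.1 hcon)⟩
      have : φ x ≤ φ z := hmax hx
      linarith
  have hlim : Tendsto (fun k : ℕ => ∫ x in Ω, smoothTransition (-(φ x) / (1 / ((k:ℝ) + 1)))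
      * (pd 0 (X 0) x + pd 1 (X 1) x)) atTop (𝓝 (∫ x in Ω, (pd 0 (X 0) x + pd 1 (X 1) x))) := by
    have hcd : Continuous fun x => pd 0 (X 0) x + pd 1 (X 1) x :=
      ((hX 0).pd 0).cont.add ((hX 1).pd 1).cont
    apply tendsto_integral_of_dominated_convergence (fun x => |pd 0 (X 0) x + pd 1 (X 1) x|)
    · intro k
      apply Continuous.aestronglyMeasurable
      exact (smoothTransition.continuous.comp (h.sm.cont.neg.div_const _)).mul hcd
    · exact (h.intOn hcd).norm
    · intro k
      refine Eventually.of_forall fun x => ?_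
      rw [norm_mul, Real.norm_eq_abs, Real.norm_eq_abs]
      rw [abs_of_nonneg (smoothTransition.nonneg _)]
      exact mul_le_of_le_one_left (abs_nonneg _) (smoothTransition.le_one _)
    · filter_upwards [ae_restrict_mem h.meas] with x hx
      have hx' : φ x < 0 := by rw [h.eq] at hx; exact hx
      apply tendsto_const_nhds.congr'
      obtain ⟨N, hN⟩ := exists_nat_gt (1 / -(φ x))
      filter_upwards [eventually_ge_atTop N] with k hk
      rw [smoothTransition.one_of_one_le, one_mul]
      have hk' : (N:ℝ) ≤ k := by exact_mod_cast hk
      rw [div_lt_iff₀ (by linarith)] at hN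
      rw [div_div_eq_mul_div, div_one]
      nlinarith
  apply ge_of_tendsto hlim
  obtain ⟨N, hN⟩ := exists_nat_gt (1 / c)
  filter_upwards [eventually_ge_atTop N] with k hk
  have hk' : (N:ℝ) ≤ k := by exact_mod_cast hk
  apply h.ibp hX (by positivity)
  intro x h1 h2
  refine hcp x (le_trans ?_ h1) h2
  rw [neg_le_neg_iff, div_le_iff₀ (by positivity)]
  rw [div_lt_iff₀ hc] at hN
  nlinarith

lemma grad_pos {Ω : Set V2} {φ : V2 → ℝ} (h : Dfn Ω φ) {x : V2} (hx : x ∈ frontier Ω) : 0 < pd 0 φ x * pd 0 φ x + pd 1 φ x * pd 1 φ x := by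
  have := h.ne x hx
  by_contra hc
  apply this
  have h0 : pd 0 φ x = 0 := by nlinarith [mul_self_nonneg (pd 0 φ x), mul_self_nonneg (pd 1 φ x)]
  have h1 : pd 1 φ x = 0 := by nlinarith [mul_self_nonneg (pd 0 φ x), mul_self_nonneg (pd 1 φ x)]
  ext i; fin_cases i <;> simp [grad, h0, h1]

/-- Sign version of the divergence theorem. -/
lemma div_nonneg' {Ω : Set V2} {φ : V2 → ℝ} (h : Dfn Ω φ) {X : Fin 2 → V2 → ℝ} (hX : ∀ i, Sm (X i))
    (hpos : ∀ x ∈ frontier Ω, 0 ≤ X 0 x * pd 0 φ x + X 1 x * pd 1 φ x) :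
    0 ≤ ∫ x in Ω, (pd 0 (X 0) x + pd 1 (X 1) x) := by
  have hcd : Continuous fun x => pd 0 (X 0) x + pd 1 (X 1) x :=
      ((hX 0).pd 0).cont.add ((hX 1).pd 1).cont
  have hcl : Continuous fun x => pd 0 (pd 0 φ) x + pd 1 (pd 1 φ) x :=
      ((h.sm.pd 0).pd 0).cont.add ((h.sm.pd 1).pd 1).cont
  have key : ∀ δ > 0, 0 ≤ (∫ x in Ω, (pd 0 (X 0) x + pd 1 (X 1) x))
      + δ * ∫ x in Ω, (pd 0 (pd 0 φ) x + pd 1 (pd 1 φ) x) := by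
    intro δ hδ
    have hs : ∀ i, Sm (fun x => δ * pd i φ x) := fun i => contDiff_const.mul (h.sm.pd i)
    have := h.div_nonneg_strict (X := fun i x => X i x + δ * pd i φ x)
      (fun i => (hX i).add (hs i)) (by
        intro x hx
        have h1 := hpos x hx
        have h2 := mul_pos hδ (h.grad_pos hx)
        nlinarith)
    rw [← integral_const_mul, ← integral_add (h.intOn hcd) ((h.intOn hcl).const_mul δ)]
    convert this using 3 with x
    rw [pd_add (hX 0).diff (hs 0).diff, pd_add (hX 1).diff (hs 1).diff,
      pd_mul (differentiable_const δ) (h.sm.pd 0).diff,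
      pd_mul (differentiable_const δ) (h.sm.pd 1).diff]
    simp [pd]; ring
  apply le_of_forall_pos_le_add
  intro e he
  set L := ∫ x in Ω, (pd 0 (pd 0 φ) x + pd 1 (pd 1 φ) x)
  have := key (e / (|L| + 1)) (by positivity)
  have h2 : e / (|L| + 1) * L ≤ e := by
    rw [div_mul_eq_mul_div, div_le_iff₀ (by positivity)]
    nlinarith [le_abs_self L]
  linarith

lemma div_zero {Ω : Set V2} {φ : V2 → ℝ} (h : Dfn Ω φ) {X : Fin 2 → V2 → ℝ} (hX : ∀ i, Sm (X i))
    (hz : ∀ x ∈ frontier Ω, X 0 x * pd 0 φ x + X 1 x * pd 1 φ x = 0) :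
    ∫ x in Ω, (pd 0 (X 0) x + pd 1 (X 1) x) = 0 := by
  apply le_antisymm
  · have := h.div_nonneg' (X := fun i x => - X i x) (fun i => (hX i).neg) (by
      intro x hx; have := hz x hx; linarith)
    simp only [pd_neg] at this
    rw [show (fun x => -pd 0 (X 0) x + -pd 1 (X 1) x) = fun x => -(pd 0 (X 0) x + pd 1 (X 1) x) by
      ext x; ring, integral_neg] at this
    linarith
  · exact h.div_nonneg' hX (fun x hx => (hz x hx).ge)

end Dfn

lemma line_deriv {f : V2 → ℝ} (hf : Sm f) (x v : V2) (s : ℝ) :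
    HasDerivAt (fun s : ℝ => f (x + s • v))
      (v 0 * pd 0 f (x + s • v) + v 1 * pd 1 f (x + s • v)) s := by
  have h1 : HasDerivAt (fun s : ℝ => x + s • v) v s := by
    simpa using ((hasDerivAt_id s).smul_const v).const_add x
  have := (hf.diff (x + s • v)).hasFDerivAt.comp_hasDerivAt s h1
  rwa [fderiv_eq] at this

namespace Dfn

lemma tangent {Ω : Set V2} {φ : V2 → ℝ} (h : Dfn Ω φ) {G : V2 → ℝ} (hG : Sm G)
    (hG0 : ∀ x ∈ frontier Ω, G x = 0) {x : V2} (hx : x ∈ frontier Ω) {v : V2}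
    (hv : v 0 * pd 0 φ x + v 1 * pd 1 φ x = 0) : v 0 * pd 0 G x + v 1 * pd 1 G x = 0 := by
  have hx0 : φ x = 0 := by rw [h.fr] at hx; exact hx
  have hext : IsLocalExtrOn G {y | φ y = φ x} x := by
    left
    filter_upwards [self_mem_nhdsWithin] with y hy
    rw [hG0 x hx, hG0 y (by rw [h.fr]; exact Eq.trans hy hx0)]
  obtain ⟨a, b, hab, hl⟩ := hext.exists_multipliers_of_hasStrictFDerivAt_1d
    (h.sm.contDiffAt.hasStrictFDerivAt (by simp)) (hG.contDiffAt.hasStrictFDerivAt (by simp))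
  have hl' : ∀ v : V2, a * (v 0 * pd 0 φ x + v 1 * pd 1 φ x)
      + b * (v 0 * pd 0 G x + v 1 * pd 1 G x) = 0 := by
    intro v
    have := congrArg (fun L => L v) hl
    simpa [fderiv_eq] using this
  have h1 := hl' v
  rw [hv] at h1
  have hb : b ≠ 0 := by
    intro hb
    have h2 := hl' ![pd 0 φ x, pd 1 φ x]
    have h3 := h.grad_pos hx
    simp [hb] at h2
    rcases h2 with h2 | h2
    · exact hab (by simp [h2, hb])
    · linarith
  have : b * (v 0 * pd 0 G x + v 1 * pd 1 G x) = 0 := by linarith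
  exact (mul_eq_zero.1 this).resolve_left hb

lemma support {Ω : Set V2} {φ : V2 → ℝ} (h : Dfn Ω φ) (hc : Convex ℝ Ω) {x y : V2}
    (hx : x ∈ frontier Ω) (hy : y ∈ Ω) :
    (y - x) 0 * pd 0 φ x + (y - x) 1 * pd 1 φ x ≤ 0 := by
  have hx0 : φ x = 0 := by rw [h.fr] at hx; exact hx
  have hd := line_deriv h.sm x (y - x) 0
  have ht := hd.tendsto_slope_zero_right
  simp only [zero_smul, add_zero, zero_add] at ht
  apply le_of_tendsto ht
  have : Ioo (0:ℝ) 1 ∈ 𝓝[>] (0:ℝ) := Ioo_mem_nhdsGT one_pos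
  filter_upwards [this] with s hs
  have hm : x + s • (y - x) ∈ closure Ω :=
    hc.closure.add_smul_sub_mem (frontier_subset_closure hx) (subset_closure hy) ⟨hs.1.le, hs.2.le⟩
  rw [h.closure_eq] at hm
  have hm' : φ (x + s • (y - x)) ≤ 0 := hm
  rw [hx0, sub_zero, smul_eq_mul]
  exact mul_nonpos_of_nonneg_of_nonpos (inv_nonneg.2 hs.1.le) hm'

lemma line_nonneg {Ω : Set V2} {φ : V2 → ℝ} (h : Dfn Ω φ) (hc : Convex ℝ Ω) {x v : V2}
    (hx : x ∈ frontier Ω) (hv : v 0 * pd 0 φ x + v 1 * pd 1 φ x = 0) (s : ℝ) :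
    0 ≤ φ (x + s • v) := by
  by_contra hcon
  have hm : x + s • v ∈ Ω := by rw [h.eq]; exact not_le.1 hcon
  have hcont : Continuous fun δ : ℝ => x + s • v + δ • grad φ x := by fun_prop
  have h0 : ∀ᶠ δ in 𝓝[>] (0:ℝ), x + s • v + δ • grad φ x ∈ Ω := by
    apply nhdsWithin_le_nhds
    apply hcont.continuousAt.eventually_mem
    apply h.isOpen.mem_nhds
    simpa using hm
  obtain ⟨δ, hδ, hδ0⟩ := (h0.and self_mem_nhdsWithin).exists
  have hs := h.support hc hx hδ
  have hδ0' : 0 < δ := hδ0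
  have hp := mul_pos hδ0' (h.grad_pos hx)
  simp [grad] at hs
  nlinarith [congrArg (fun z => s * z) hv]

lemma hess_nonneg {Ω : Set V2} {φ : V2 → ℝ} (h : Dfn Ω φ) (hc : Convex ℝ Ω) {x v : V2}
    (hx : x ∈ frontier Ω) (hv : v 0 * pd 0 φ x + v 1 * pd 1 φ x = 0) :
    0 ≤ v 0 * (v 0 * pd 0 (pd 0 φ) x + v 1 * pd 1 (pd 0 φ) x)
      + v 1 * (v 0 * pd 0 (pd 1 φ) x + v 1 * pd 1 (pd 1 φ) x) := by
  have hx0 : φ x = 0 := by rw [h.fr] at hx; exact hx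
  have hd1 : deriv (fun s : ℝ => φ (x + s • v)) = fun s =>
      v 0 * pd 0 φ (x + s • v) + v 1 * pd 1 φ (x + s • v) := by
    ext s; exact (line_deriv h.sm x v s).deriv
  have hd2 := ((line_deriv (h.sm.pd 0) x v 0).const_mul (v 0)).add
    ((line_deriv (h.sm.pd 1) x v 0).const_mul (v 1))
  have hd2' : deriv (deriv (fun s : ℝ => φ (x + s • v))) 0 =
      v 0 * (v 0 * pd 0 (pd 0 φ) x + v 1 * pd 1 (pd 0 φ) x)
      + v 1 * (v 0 * pd 0 (pd 1 φ) x + v 1 * pd 1 (pd 1 φ) x) := by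
    rw [hd1]
    have := hd2.deriv
    simp only [zero_smul, add_zero] at this
    exact this
  rw [← hd2']
  by_contra hcon
  have hmax := isLocalMax_of_deriv_deriv_neg (not_le.1 hcon) (by rw [hd1]; simpa using hv)
    (line_deriv h.sm x v 0).continuousAt
  have he : (fun s : ℝ => φ (x + s • v)) =ᶠ[𝓝 0] fun _ => 0 := by
    filter_upwards [hmax] with s hs
    apply le_antisymm _ (h.line_nonneg hc hx hv s)
    simpa [hx0] using hs
  apply hcon
  rw [he.deriv.deriv_eq]
  simp

/-- mean value control for tangential fields -/
lemma mean_eq {Ω : Set V2} {φ : V2 → ℝ} (h : Dfn Ω φ) {w : V2 → V2}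
    (hw : ∀ i, Sm (fun x => w x i))
    (hb : ∀ x ∈ frontier Ω, w x 0 * pd 0 φ x + w x 1 * pd 1 φ x = 0) (i : Fin 2) :
    ∫ x in Ω, w x i = - ∫ x in Ω, x i * div2 w x := by
  have hz := h.div_zero (X := fun j x => x i * w x j) (fun j => (sm_coord i).mul (hw j)) (by
    intro x hx
    have := hb x hx
    linear_combination (x i) * this)
  have hdiv : Continuous (div2 w) := by
    unfold div2
    exact continuous_finsetSum _ fun j _ => ((hw j).pd j).cont
  have hsum : ∫ x in Ω, (w x i + x i * div2 w x) = 0 := by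
    rw [← hz]
    congr 1; ext x
    rw [pd_mul (sm_coord i).diff (hw 0).diff, pd_mul (sm_coord i).diff (hw 1).diff, pd_coord,
      pd_coord, div2, Fin.sum_univ_two]
    fin_cases i <;> simp <;> ring
  have hci : Continuous fun x : V2 => x i * div2 w x := (continuous_apply i).mul hdiv
  rw [integral_add (h.intOn (hw i).cont) (h.intOn hci)] at hsum
  linarith

lemma pd_cont {f : V2 → ℝ} (hf : Sm f) (i : Fin 2) : Continuous (pd i f) := (hf.pd i).cont

/-- the div-curl estimate on convex domains for tangential fields -/
lemma div_curl {Ω : Set V2} {φ : V2 → ℝ} (h : Dfn Ω φ) (hc : Convex ℝ Ω) {w : V2 → V2}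
    (hw : ∀ i, Sm (fun x => w x i))
    (hb : ∀ x ∈ frontier Ω, w x 0 * pd 0 φ x + w x 1 * pd 1 φ x = 0) :
    ∫ x in Ω, gnsq w x ≤ ∫ x in Ω, ((div2 w x) ^ 2 + (curl2 w x) ^ 2) := by
  set w0 : V2 → ℝ := fun x => w x 0 with hw0
  set w1 : V2 → ℝ := fun x => w x 1 with hw1
  have s0 : Sm w0 := hw 0
  have s1 : Sm w1 := hw 1
  set X : Fin 2 → V2 → ℝ := ![fun x => w0 x * pd 1 w1 x - w1 x * pd 1 w0 x,
    fun x => w1 x * pd 0 w0 x - w0 x * pd 0 w1 x] with hX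
  have hXs : ∀ i, Sm (X i) := by
    intro i
    fin_cases i
    · exact (s0.mul (s1.pd 1)).sub (s1.mul (s0.pd 1))
    · exact (s1.mul (s0.pd 0)).sub (s0.mul (s1.pd 0))
  have hn := h.div_nonneg' hXs (by
    intro x hx
    have hbx := hb x hx
    have hp := h.grad_pos hx
    have hG : Sm (fun x => w0 x * pd 0 φ x + w1 x * pd 1 φ x) :=
      (s0.mul (h.sm.pd 0)).add (s1.mul (h.sm.pd 1))
    have ht := h.tangent hG hb hx (v := ![-pd 1 φ x, pd 0 φ x]) (by simp; ring)
    have hh := h.hess_nonneg hc hx (v := ![-pd 1 φ x, pd 0 φ x]) (by simp; ring)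
    have e : ∀ i, pd i (fun x => w0 x * pd 0 φ x + w1 x * pd 1 φ x) x =
        (pd i w0 x * pd 0 φ x + w0 x * pd i (pd 0 φ) x)
        + (pd i w1 x * pd 1 φ x + w1 x * pd i (pd 1 φ) x) := by
      intro i
      rw [pd_add (s0.mul (h.sm.pd 0)).diff (s1.mul (h.sm.pd 1)).diff,
        pd_mul s0.diff (h.sm.pd 0).diff, pd_mul s1.diff (h.sm.pd 1).diff]
    rw [e 0, e 1] at ht
    simp only [Matrix.cons_val_zero, Matrix.cons_val_one] at ht hh
    simp only [hX, Matrix.cons_val_zero, Matrix.cons_val_one]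
    have hbx' : w0 x * pd 0 φ x + w1 x * pd 1 φ x = 0 := hbx
    obtain ⟨c, hc0, hc1⟩ : ∃ c, w0 x = - c * pd 1 φ x ∧ w1 x = c * pd 0 φ x := by
      refine ⟨(w1 x * pd 0 φ x - w0 x * pd 1 φ x)
        / (pd 0 φ x * pd 0 φ x + pd 1 φ x * pd 1 φ x), ?_, ?_⟩
      · rw [← neg_div, div_mul_eq_mul_div, eq_div_iff hp.ne']
        linear_combination (pd 0 φ x) * hbx'
      · rw [div_mul_eq_mul_div, eq_div_iff hp.ne']
        linear_combination (pd 1 φ x) * hbx'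
    rw [hc0, hc1] at ht ⊢
    have hcc := mul_nonneg (mul_self_nonneg c) hh
    have hct := congrArg (fun z => c * z) ht
    simp only [mul_zero] at hct
    nlinarith [hcc, hct])
  have ediv : ∀ x, pd 0 (X 0) x + pd 1 (X 1) x
      = 2 * (pd 0 w0 x * pd 1 w1 x - pd 0 w1 x * pd 1 w0 x) := by
    intro x
    simp only [hX, Matrix.cons_val_zero, Matrix.cons_val_one]
    rw [pd_sub (s0.mul (s1.pd 1)).diff (s1.mul (s0.pd 1)).diff,
      pd_sub (s1.mul (s0.pd 0)).diff (s0.mul (s1.pd 0)).diff,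
      pd_mul s0.diff (s1.pd 1).diff, pd_mul s1.diff (s0.pd 1).diff,
      pd_mul s1.diff (s0.pd 0).diff, pd_mul s0.diff (s1.pd 0).diff,
      pd_comm s1 0 1, pd_comm s0 0 1]
    ring
  have hcg : Continuous (gnsq w) := by
    unfold gnsq
    exact continuous_finsetSum _ fun j _ => continuous_finsetSum _ fun k _ =>
      (((hw j).pd k).cont.pow 2)
  have hcd : Continuous fun x => pd 0 (X 0) x + pd 1 (X 1) x :=
    ((hXs 0).pd 0).cont.add ((hXs 1).pd 1).cont
  have : ∫ x in Ω, ((div2 w x) ^ 2 + (curl2 w x) ^ 2)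
      = (∫ x in Ω, gnsq w x) + ∫ x in Ω, (pd 0 (X 0) x + pd 1 (X 1) x) := by
    rw [← integral_add (h.intOn hcg) (h.intOn hcd)]
    congr 1; ext x
    rw [ediv, div2, curl2, gnsq]
    simp only [Fin.sum_univ_two]
    ring
  linarith

end Dfn

lemma lint_scale {k : V2 → ℝ≥0∞} (hk : Measurable k) {Ω : Set V2} (hΩ : MeasurableSet Ω) (c : V2)
    {s : ℝ} (hs : 0 < s) (hsub : ∀ y ∈ Ω, c + s • y ∈ Ω) :
    ∫⁻ y in Ω, k (c + s • y) ≤ ENNReal.ofReal s ^ (-2 : ℝ) * ∫⁻ y in Ω, k y := by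
  have hm : Measurable (Ω.indicator k) := hk.indicator hΩ
  have h1 : ∫⁻ y in Ω, k (c + s • y) ≤ ∫⁻ y, Ω.indicator k (c + s • y) := by
    rw [← lintegral_indicator hΩ]
    apply lintegral_mono
    intro y
    by_cases hy : y ∈ Ω
    · simp [hy, hsub y hy]
    · simp [hy]
  have h2 : ∫⁻ y, Ω.indicator k (c + s • y) = ENNReal.ofReal s ^ (-2 : ℝ) * ∫⁻ y in Ω, k y := by
    have h3 : ∫⁻ y, Ω.indicator k (c + s • y) =
        ∫⁻ z, Ω.indicator k (c + z) ∂(Measure.map (fun y : V2 => s • y) volume) := by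
      exact (lintegral_map (f := fun z => Ω.indicator k (c + z))
        (hm.comp (measurable_const_add c)) (measurable_const_smul s)).symm
    have h4 : Measure.map (fun y : V2 => s • y) volume
        = ENNReal.ofReal |(s ^ 2)⁻¹| • (volume : Measure V2) := by
      have := Measure.map_addHaar_smul (volume : Measure V2) hs.ne'
      simpa using this
    rw [h3, h4, lintegral_smul_measure, lintegral_add_left_eq_self (Ω.indicator k) c,
      lintegral_indicator hΩ, smul_eq_mul]
    congr 1
    rw [abs_of_pos (by positivity), ENNReal.ofReal_rpow_of_pos hs]
    congr 1
    rw [Real.rpow_neg hs.le]; norm_cast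
  exact h1.trans h2.le

lemma lint_rpow_lt {r : ℝ} (hr : -1 < r) :
    ∫⁻ s in Ioc (0:ℝ) 1, ENNReal.ofReal s ^ r < ⊤ := by
  have h1 : IntegrableOn (fun s : ℝ => s ^ r) (Ioc 0 1) :=
    (intervalIntegrable_iff_integrableOn_Ioc_of_le zero_le_one).1
      (intervalIntegral.intervalIntegrable_rpow' hr)
  have h2 := h1.lintegral_lt_top
  refine lt_of_le_of_lt (le_of_eq ?_) h2
  apply setLIntegral_congr_fun measurableSet_Ioc
  intro s hs
  exact ENNReal.ofReal_rpow_of_pos hs.1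

/-- average of `g` over homothetic copies -/
def TT (Ω : Set V2) (g : V2 → ℝ≥0∞) (s : ℝ) (x : V2) : ℝ≥0∞ := ∫⁻ y in Ω, g (x + s • (y - x))

lemma TT_meas (Ω : Set V2) {g : V2 → ℝ≥0∞} (hg : Measurable g) :
    Measurable (fun z : ℝ × V2 => TT Ω g z.1 z.2) := by
  unfold TT
  apply Measurable.lintegral_prod_right' (f := fun w : (ℝ × V2) × V2 =>
    g (w.1.2 + w.1.1 • (w.2 - w.1.2)))
  apply hg.comp
  fun_prop

lemma TT_meas_s (Ω : Set V2) {g : V2 → ℝ≥0∞} (hg : Measurable g) (x : V2) :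
    Measurable (fun s : ℝ => TT Ω g s x) :=
  (TT_meas Ω hg).comp (measurable_id.prodMk measurable_const)

lemma TT_meas_x (Ω : Set V2) {g : V2 → ℝ≥0∞} (hg : Measurable g) (s : ℝ) :
    Measurable (fun x : V2 => TT Ω g s x) :=
  (TT_meas Ω hg).comp (measurable_const.prodMk measurable_id)

lemma TT_cs (Ω : Set V2) {g : V2 → ℝ≥0∞} (hg : Measurable g) (s : ℝ) (x : V2) :
    TT Ω g s x ≤ (TT Ω (fun y => g y ^ (2:ℝ)) s x) ^ (1/2 : ℝ) * (volume Ω) ^ (1/2 : ℝ) := by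
  unfold TT
  have hm : Measurable (fun y : V2 => g (x + s • (y - x))) := hg.comp (by fun_prop)
  have h := ENNReal.lintegral_mul_le_Lp_mul_Lq (volume.restrict Ω)
    (Real.HolderConjugate.two_two) hm.aemeasurable
    (aemeasurable_const (b := (1 : ℝ≥0∞)))
  simpa using h

lemma TT_scale {Ω : Set V2} (hΩ : MeasurableSet Ω) (hc : Convex ℝ Ω) {k : V2 → ℝ≥0∞}
    (hk : Measurable k) {s : ℝ} (hs : s ∈ Ioc (0:ℝ) 1) {x : V2} (hx : x ∈ Ω) :
    TT Ω k s x ≤ ENNReal.ofReal s ^ (-2 : ℝ) * ∫⁻ y in Ω, k y := by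
  have e : ∀ y : V2, x + s • (y - x) = (1 - s) • x + s • y := by
    intro y; module
  unfold TT
  simp_rw [e]
  apply lint_scale hk hΩ _ hs.1
  intro y hy
  exact hc hx hy (by linarith [hs.2]) hs.1.le (by ring)

lemma four_bd {s : ℝ} (hs : 1/2 ≤ s) : ENNReal.ofReal s ^ (-2 : ℝ) ≤ 4 := by
  rw [ENNReal.ofReal_rpow_of_pos (by linarith), show (4 : ℝ≥0∞) = ENNReal.ofReal 4 by simp]
  apply ENNReal.ofReal_le_ofReal
  rw [Real.rpow_neg (by linarith)]
  norm_cast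
  rw [inv_le_comm₀ (by positivity) (by norm_num)]
  nlinarith

lemma TT_int {Ω : Set V2} (hΩ : MeasurableSet Ω) (hc : Convex ℝ Ω) {k : V2 → ℝ≥0∞}
    (hk : Measurable k) {s : ℝ} (hs : s ∈ Ioc (0:ℝ) 1) :
    ∫⁻ x in Ω, TT Ω k s x ≤ 4 * (∫⁻ y in Ω, k y) * volume Ω := by
  rcases le_total (1/2) s with h | h
  · calc ∫⁻ x in Ω, TT Ω k s x ≤ ∫⁻ x in Ω, 4 * ∫⁻ y in Ω, k y := by
          apply setLIntegral_mono measurable_const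
          intro x hx
          exact (TT_scale hΩ hc hk hs hx).trans (mul_le_mul_left (four_bd h) _)
      _ = _ := by simp
  · have hsw : ∫⁻ x in Ω, TT Ω k s x = ∫⁻ y in Ω, TT Ω k (1 - s) y := by
      unfold TT
      rw [lintegral_lintegral_swap]
      · congr 1; ext y; congr 1; ext x; congr 1; module
      · apply Measurable.aemeasurable
        apply hk.comp
        fun_prop
    rw [hsw]
    have hs' : 1 - s ∈ Ioc (0:ℝ) 1 := ⟨by linarith, by linarith [hs.1]⟩
    calc ∫⁻ x in Ω, TT Ω k (1 - s) x ≤ ∫⁻ x in Ω, 4 * ∫⁻ y in Ω, k y := by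
          apply setLIntegral_mono measurable_const
          intro x hx
          exact (TT_scale hΩ hc hk hs' hx).trans (mul_le_mul_left (four_bd (by linarith)) _)
      _ = _ := by simp

lemma TT_pow {Ω : Set V2} (hΩ : MeasurableSet Ω) (hc : Convex ℝ Ω) {g : V2 → ℝ≥0∞}
    (hg : Measurable g) {q : ℝ} (hq : 2 ≤ q) {s : ℝ} (hs : s ∈ Ioc (0:ℝ) 1) {x : V2} (hx : x ∈ Ω) :
    ENNReal.ofReal s ^ (q - 2) * TT Ω g s x ^ q ≤
      (volume Ω) ^ (q/2) * (∫⁻ y in Ω, g y ^ (2:ℝ)) ^ (q/2 - 1)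
        * TT Ω (fun y => g y ^ (2:ℝ)) s x := by
  set S := TT Ω (fun y => g y ^ (2:ℝ)) s x with hS
  set G := ∫⁻ y in Ω, g y ^ (2:ℝ)
  set σ := ENNReal.ofReal s with hσ
  have hσ0 : σ ≠ 0 := by simp [hσ, hs.1]
  have hσt : σ ≠ ⊤ := by simp [hσ]
  have h1 : TT Ω g s x ^ q ≤ S ^ (q/2) * (volume Ω) ^ (q/2) := by
    calc TT Ω g s x ^ q ≤ (S ^ (1/2 : ℝ) * (volume Ω) ^ (1/2 : ℝ)) ^ q :=
          ENNReal.rpow_le_rpow (TT_cs Ω hg s x) (by linarith)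
      _ = _ := by
          rw [ENNReal.mul_rpow_of_nonneg _ _ (by linarith), ← ENNReal.rpow_mul,
            ← ENNReal.rpow_mul]
          congr 2 <;> ring
  have h2 : S ≤ σ ^ (-2 : ℝ) * G := TT_scale hΩ hc (hg.pow_const _) hs hx
  have h3 : S ^ (q/2) ≤ σ ^ (-(q - 2)) * G ^ (q/2 - 1) * S := by
    calc S ^ (q/2) = S ^ (q/2 - 1) * S := by
          conv_lhs => rw [show q/2 = (q/2 - 1) + 1 by ring]
          rw [ENNReal.rpow_add_of_nonneg _ _ (by linarith) (by norm_num), ENNReal.rpow_one]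
      _ ≤ (σ ^ (-2 : ℝ) * G) ^ (q/2 - 1) * S := by
          gcongr
          linarith
      _ = _ := by
          rw [ENNReal.mul_rpow_of_nonneg _ _ (by linarith), ← ENNReal.rpow_mul]
          congr 3; ring
  calc σ ^ (q - 2) * TT Ω g s x ^ q
      ≤ σ ^ (q - 2) * ((σ ^ (-(q - 2)) * G ^ (q/2 - 1) * S) * (volume Ω) ^ (q/2)) := by
        gcongr
        exact h1.trans (by gcongr)
    _ = (σ ^ (q - 2) * σ ^ (-(q - 2))) * ((volume Ω) ^ (q/2) * G ^ (q/2 - 1) * S) := by ring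
    _ = _ := by
        rw [← ENNReal.rpow_add _ _ hσ0 hσt]; simp

lemma TT_main {Ω : Set V2} (hΩ : MeasurableSet Ω) (hc : Convex ℝ Ω) {q : ℝ} (hq : 2 ≤ q)
    (hv : volume Ω ≠ ⊤) :
    ∃ C : ℝ≥0∞, C ≠ ⊤ ∧ ∀ g : V2 → ℝ≥0∞, Measurable g →
      ∫⁻ x in Ω, (∫⁻ s in Ioc (0:ℝ) 1, TT Ω g s x) ^ q
        ≤ C * (∫⁻ y in Ω, g y ^ (2:ℝ)) ^ (q/2) := by
  have hq1 : 1 < q := by linarith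
  have hconj : (q.conjExponent).HolderConjugate q := (Real.HolderConjugate.conjExponent hq1).symm
  set q' := q.conjExponent with hq'
  set β := (q - 2) / q with hβ
  set K := (∫⁻ s in Ioc (0:ℝ) 1, (ENNReal.ofReal s ^ (-β)) ^ q') ^ (1/q') with hK
  have hKt : K ≠ ⊤ := by
    rw [hK]
    apply ENNReal.rpow_ne_top_of_nonneg (by have := hconj.pos; positivity)
    simp_rw [← ENNReal.rpow_mul]
    apply (lint_rpow_lt _).ne
    have : -β * q' = -((q-2)/(q-1)) := by
      rw [hβ, hq', Real.conjExponent]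
      field_simp
    rw [this, neg_lt_neg_iff, div_lt_one (by linarith)]
    linarith
  refine ⟨K ^ q * ((volume Ω) ^ (q/2) * (4 * volume Ω)), ?_, ?_⟩
  · refine ENNReal.mul_ne_top (ENNReal.rpow_ne_top_of_nonneg (by linarith) hKt) ?_
    refine ENNReal.mul_ne_top (ENNReal.rpow_ne_top_of_nonneg (by linarith) hv) ?_
    exact ENNReal.mul_ne_top (by simp) hv
  intro g hg
  set G := ∫⁻ y in Ω, g y ^ (2:ℝ) with hG
  have hg2 : Measurable (fun y => g y ^ (2:ℝ)) := hg.pow_const _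
  have hpt : ∀ x ∈ Ω, (∫⁻ s in Ioc (0:ℝ) 1, TT Ω g s x) ^ q ≤
      K ^ q * ∫⁻ s in Ioc (0:ℝ) 1, (volume Ω) ^ (q/2) * G ^ (q/2 - 1)
        * TT Ω (fun y => g y ^ (2:ℝ)) s x := by
    intro x hx
    have hm := TT_meas_s Ω hg x
    have hh := ENNReal.lintegral_mul_le_Lp_mul_Lq (volume.restrict (Ioc (0:ℝ) 1)) hconj
      (f := fun s => ENNReal.ofReal s ^ (-β)) (g := fun s => ENNReal.ofReal s ^ β * TT Ω g s x)
      (by fun_prop) (by fun_prop)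
    have e1 : ∫⁻ s in Ioc (0:ℝ) 1, TT Ω g s x = ∫⁻ s in Ioc (0:ℝ) 1,
        ((fun s => ENNReal.ofReal s ^ (-β)) * (fun s => ENNReal.ofReal s ^ β * TT Ω g s x)) s := by
      apply setLIntegral_congr_fun measurableSet_Ioc
      intro s hs
      simp only [Pi.mul_apply]
      rw [← mul_assoc, ← ENNReal.rpow_add _ _ (by simp [hs.1]) (by simp)]
      simp
    have e2 : ∫⁻ s in Ioc (0:ℝ) 1, (ENNReal.ofReal s ^ β * TT Ω g s x) ^ q
        ≤ ∫⁻ s in Ioc (0:ℝ) 1, (volume Ω) ^ (q/2) * G ^ (q/2 - 1)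
        * TT Ω (fun y => g y ^ (2:ℝ)) s x := by
      apply setLIntegral_mono' measurableSet_Ioc
      intro s hs
      refine le_trans (le_of_eq ?_) (TT_pow hΩ hc hg hq hs hx)
      rw [ENNReal.mul_rpow_of_nonneg _ _ (by linarith), ← ENNReal.rpow_mul]
      congr 2
      rw [hβ]; field_simp
    rw [e1]
    calc _ ≤ (K * (∫⁻ s in Ioc (0:ℝ) 1, (ENNReal.ofReal s ^ β * TT Ω g s x) ^ q) ^ (1/q)) ^ q :=
          ENNReal.rpow_le_rpow hh (by linarith)
      _ = K ^ q * ∫⁻ s in Ioc (0:ℝ) 1, (ENNReal.ofReal s ^ β * TT Ω g s x) ^ q := by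
          rw [ENNReal.mul_rpow_of_nonneg _ _ (by linarith)]
          congr 1
          rw [← ENNReal.rpow_mul, one_div_mul_cancel (by linarith), ENNReal.rpow_one]
      _ ≤ _ := by gcongr
  have hmS : Measurable (fun z : V2 × ℝ => TT Ω (fun y => g y ^ (2:ℝ)) z.2 z.1) :=
    (TT_meas Ω hg2).comp measurable_swap
  calc ∫⁻ x in Ω, (∫⁻ s in Ioc (0:ℝ) 1, TT Ω g s x) ^ q
      ≤ ∫⁻ x in Ω, K ^ q * ∫⁻ s in Ioc (0:ℝ) 1, (volume Ω) ^ (q/2) * G ^ (q/2 - 1)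
        * TT Ω (fun y => g y ^ (2:ℝ)) s x := setLIntegral_mono' hΩ hpt
    _ = K ^ q * ((volume Ω) ^ (q/2) * G ^ (q/2 - 1) *
        ∫⁻ x in Ω, ∫⁻ s in Ioc (0:ℝ) 1, TT Ω (fun y => g y ^ (2:ℝ)) s x) := by
        have hx1 : ∀ x, ∫⁻ s in Ioc (0:ℝ) 1, (volume Ω) ^ (q/2) * G ^ (q/2 - 1)
            * TT Ω (fun y => g y ^ (2:ℝ)) s x = (volume Ω) ^ (q/2) * G ^ (q/2 - 1)
            * ∫⁻ s in Ioc (0:ℝ) 1, TT Ω (fun y => g y ^ (2:ℝ)) s x :=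
          fun x => lintegral_const_mul _ (TT_meas_s Ω hg2 x)
        simp_rw [hx1]
        rw [lintegral_const_mul, lintegral_const_mul]
        · exact hmS.lintegral_prod_right'
        · exact (hmS.lintegral_prod_right').const_mul _
    _ = K ^ q * ((volume Ω) ^ (q/2) * G ^ (q/2 - 1) *
        ∫⁻ s in Ioc (0:ℝ) 1, ∫⁻ x in Ω, TT Ω (fun y => g y ^ (2:ℝ)) s x) := by
        rw [lintegral_lintegral_swap]
        exact hmS.aemeasurable
    _ ≤ K ^ q * ((volume Ω) ^ (q/2) * G ^ (q/2 - 1) *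
        ∫⁻ s in Ioc (0:ℝ) 1, 4 * G * volume Ω) := by
        gcongr K ^ q * ((volume Ω) ^ (q/2) * G ^ (q/2 - 1) * ?_)
        exact setLIntegral_mono' measurableSet_Ioc fun s hs => TT_int hΩ hc hg2 hs
    _ = K ^ q * ((volume Ω) ^ (q/2) * (4 * volume Ω)) * (G ^ (q/2 - 1) * G) := by
        simp only [lintegral_const, Measure.restrict_apply, MeasurableSet.univ, univ_inter,
          Real.volume_Ioc]
        simp only [sub_zero, ENNReal.ofReal_one]
        ring
    _ = _ := by
        congr 1
        conv_rhs => rw [show q/2 = (q/2 - 1) + 1 by ring]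
        rw [ENNReal.rpow_add_of_nonneg _ _ (by linarith) (by norm_num), ENNReal.rpow_one]

lemma seg_bound {f : V2 → ℝ} (hf : Sm f) {D : ℝ} {x y : V2} (hD : ∀ i, |y i - x i| ≤ D) :
    ‖f x - f y‖ₑ ≤ ENNReal.ofReal D *
      ∫⁻ s in Ioc (0:ℝ) 1, ENNReal.ofReal (|pd 0 f (x + s • (y - x))| + |pd 1 f (x + s • (y - x))|) := by
  have hD0 : 0 ≤ D := (abs_nonneg _).trans (hD 0)
  have hc : Continuous fun s : ℝ => (y - x) 0 * pd 0 f (x + s • (y - x))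
      + (y - x) 1 * pd 1 f (x + s • (y - x)) := by
    have h0 := (hf.pd 0).cont
    have h1 := (hf.pd 1).cont
    have hl : Continuous fun s : ℝ => x + s • (y - x) := by fun_prop
    exact (continuous_const.mul (h0.comp hl)).add (continuous_const.mul (h1.comp hl))
  have hFTC := intervalIntegral.integral_eq_sub_of_hasDerivAt (a := 0) (b := 1)
    (fun s _ => line_deriv hf x (y - x) s) (hc.intervalIntegrable 0 1)
  simp only [one_smul, zero_smul, add_zero, add_sub_cancel] at hFTC
  rw [← enorm_neg, neg_sub, ← hFTC, intervalIntegral.integral_of_le zero_le_one]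
  refine (enorm_integral_le_lintegral_enorm _).trans ?_
  rw [← lintegral_const_mul' _ _ ENNReal.ofReal_ne_top]
  apply lintegral_mono
  intro s
  simp only
  rw [← ENNReal.ofReal_mul hD0, Real.enorm_eq_ofReal_abs]
  apply ENNReal.ofReal_le_ofReal
  refine (abs_add_le _ _).trans ?_
  rw [abs_mul, abs_mul, mul_add]
  gcongr
  · exact hD 0
  · exact hD 1

/-- `L^2` norm of the gradient (extended) -/
def GG (Ω : Set V2) (f : V2 → ℝ) : ℝ≥0∞ :=
  ∫⁻ y in Ω, (ENNReal.ofReal (|pd 0 f y| + |pd 1 f y|)) ^ (2:ℝ)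

namespace Dfn

lemma vol_pos {Ω : Set V2} {φ : V2 → ℝ} (h : Dfn Ω φ) (hne : Ω.Nonempty) : volume Ω ≠ 0 :=
  (h.isOpen.measure_pos volume hne).ne'

lemma poincare {Ω : Set V2} {φ : V2 → ℝ} (h : Dfn Ω φ) (hc : Convex ℝ Ω) (hne : Ω.Nonempty)
    {q : ℝ} (hq : 2 ≤ q) : ∃ C : ℝ≥0∞, C ≠ ⊤ ∧ ∀ f : V2 → ℝ, Sm f →
      eLpNorm (fun x => f x - avg Ω f) (ENNReal.ofReal q) (volume.restrict Ω)
        ≤ C * (GG Ω f) ^ (1/2 : ℝ) := by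
  obtain ⟨C, hC, hT⟩ := TT_main h.meas hc hq h.vol_lt.ne
  have hV0 := h.vol_pos hne
  have hVt := h.vol_lt.ne
  set V := volume Ω with hV
  obtain ⟨D, hD⟩ : ∃ D : ℝ, ∀ x ∈ Ω, ∀ y ∈ Ω, ∀ i, |y i - x i| ≤ D := by
    obtain ⟨D, hD⟩ := Metric.isBounded_iff.1 h.bdd
    refine ⟨D, fun x hx y hy i => ?_⟩
    have := hD hy hx
    exact (dist_le_pi_dist y x i).trans this
  set A : ℝ≥0∞ := V⁻¹ * ENNReal.ofReal D with hA
  have hAt : A ≠ ⊤ := ENNReal.mul_ne_top (by simp [hV0]) ENNReal.ofReal_ne_top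
  refine ⟨A * C ^ (1/q), ENNReal.mul_ne_top hAt
    (ENNReal.rpow_ne_top_of_nonneg (by positivity) hC), fun f hf => ?_⟩
  set g : V2 → ℝ≥0∞ := fun y => ENNReal.ofReal (|pd 0 f y| + |pd 1 f y|) with hg
  have hgm : Measurable g := by
    have h0 := (hf.pd 0).cont
    have h1 := (hf.pd 1).cont
    exact (h0.abs.add h1.abs).measurable.ennreal_ofReal
  have hpt : ∀ x ∈ Ω, ‖f x - avg Ω f‖ₑ ≤ A * ∫⁻ s in Ioc (0:ℝ) 1, TT Ω g s x := by
    intro x hx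
    have hVr : V.toReal ≠ 0 := by
      rw [ENNReal.toReal_ne_zero]; exact ⟨hV0, hVt⟩
    have e1 : f x - avg Ω f = V.toReal⁻¹ * ∫ y in Ω, (f x - f y) := by
      rw [integral_sub (h.intOn continuous_const) (h.intOn hf.cont), avg]
      rw [integral_const, smul_eq_mul]
      simp only [Measure.real, Measure.restrict_apply MeasurableSet.univ, univ_inter]
      rw [← hV]
      field_simp
    rw [e1, enorm_mul]
    have e2 : ‖V.toReal⁻¹‖ₑ = V⁻¹ := by
      rw [Real.enorm_eq_ofReal (by positivity), ENNReal.ofReal_inv_of_pos, ENNReal.ofReal_toReal hVt]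
      positivity
    rw [e2, hA, mul_assoc]
    gcongr
    refine (enorm_integral_le_lintegral_enorm _).trans ?_
    calc ∫⁻ y in Ω, ‖f x - f y‖ₑ
        ≤ ∫⁻ y in Ω, ENNReal.ofReal D * ∫⁻ s in Ioc (0:ℝ) 1, g (x + s • (y - x)) := by
          apply setLIntegral_mono' h.meas
          intro y hy
          exact seg_bound hf (hD x hx y hy)
      _ = ENNReal.ofReal D * ∫⁻ y in Ω, ∫⁻ s in Ioc (0:ℝ) 1, g (x + s • (y - x)) := by
          rw [lintegral_const_mul' _ _ ENNReal.ofReal_ne_top]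
      _ = _ := by
          unfold TT
          rw [lintegral_lintegral_swap]
          apply Measurable.aemeasurable
          apply hgm.comp
          fun_prop
  rw [eLpNorm_eq_lintegral_rpow_enorm_toReal (by simp; linarith) (by simp)]
  rw [ENNReal.toReal_ofReal (by linarith)]
  calc (∫⁻ x in Ω, ‖f x - avg Ω f‖ₑ ^ q) ^ (1/q)
      ≤ (∫⁻ x in Ω, A ^ q * (∫⁻ s in Ioc (0:ℝ) 1, TT Ω g s x) ^ q) ^ (1/q) := by
        apply ENNReal.rpow_le_rpow _ (by positivity)
        apply setLIntegral_mono' h.meas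
        intro x hx
        rw [← ENNReal.mul_rpow_of_nonneg _ _ (by linarith)]
        exact ENNReal.rpow_le_rpow (hpt x hx) (by linarith)
    _ ≤ (A ^ q * (C * (GG Ω f) ^ (q/2))) ^ (1/q) := by
        apply ENNReal.rpow_le_rpow _ (by positivity)
        rw [lintegral_const_mul' _ _ (ENNReal.rpow_ne_top_of_nonneg (by linarith) hAt)]
        gcongr
        exact hT g hgm
    _ = _ := by
        clear_value A
        rw [ENNReal.mul_rpow_of_nonneg _ _ (by positivity),
          ENNReal.mul_rpow_of_nonneg C _ (by positivity), ← ENNReal.rpow_mul, ← ENNReal.rpow_mul,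
          mul_one_div_cancel (by linarith), ENNReal.rpow_one, mul_assoc]
        congr 3
        field_simp

lemma memLp {Ω : Set V2} {φ : V2 → ℝ} (h : Dfn Ω φ) {f : V2 → ℝ} (hf : Continuous f) (p : ℝ≥0∞) :
    MemLp f p (volume.restrict Ω) := by
  have : IsFiniteMeasure (volume.restrict Ω) := ⟨by simpa using h.vol_lt⟩
  obtain ⟨C, hC⟩ := h.compact.exists_bound_of_continuousOn hf.continuousOn
  apply MemLp.of_bound hf.aestronglyMeasurable C
  filter_upwards [ae_restrict_mem h.meas] with x hx
  exact hC x (subset_closure hx)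

lemma LpS_eq {Ω : Set V2} {φ : V2 → ℝ} (h : Dfn Ω φ) {f : V2 → ℝ} (hf : Continuous f) {p : ℝ}
    (hp : 1 ≤ p) : LpS p Ω f = (eLpNorm f (ENNReal.ofReal p) (volume.restrict Ω)).toReal := by
  rw [(h.memLp hf _).eLpNorm_eq_integral_rpow_norm (by simp; linarith) (by simp),
    ENNReal.toReal_ofReal, ENNReal.toReal_ofReal (by linarith), LpS, one_div]
  · rfl
  · apply Real.rpow_nonneg
    exact integral_nonneg fun x => Real.rpow_nonneg (norm_nonneg _) _

/-- Sobolev-Poincare inequality on the convex domain. -/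
lemma sobolev {Ω : Set V2} {φ : V2 → ℝ} (h : Dfn Ω φ) (hc : Convex ℝ Ω) (hne : Ω.Nonempty)
    {p : ℝ} (hp : 1 ≤ p) : ∃ C : ℝ, 0 ≤ C ∧ ∀ f : V2 → ℝ, Sm f →
      LpS p Ω f ≤ C * (√(∫ x in Ω, ((pd 0 f x) ^ 2 + (pd 1 f x) ^ 2)) + |∫ x in Ω, f x|) := by
  have : IsFiniteMeasure (volume.restrict Ω) := ⟨by simpa using h.vol_lt⟩
  obtain ⟨C, hC, hP⟩ := h.poincare hc hne (q := max p 2) (le_max_right _ _)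
  have hV0 := h.vol_pos hne
  have hVt := h.vol_lt.ne
  set q := max p 2
  set V := volume Ω with hV
  set W : ℝ≥0∞ := V ^ (1 / p - 1 / q) with hW
  have hWt : W ≠ ⊤ := ENNReal.rpow_ne_top_of_ne_zero hV0 hVt
  set W' : ℝ≥0∞ := V ^ (1 / p) with hW'
  have hWt' : W' ≠ ⊤ := ENNReal.rpow_ne_top_of_ne_zero hV0 hVt
  refine ⟨C.toReal * W.toReal * √2 + V.toReal⁻¹ * W'.toReal, by positivity, fun f hf => ?_⟩
  set I := ∫ x in Ω, ((pd 0 f x) ^ 2 + (pd 1 f x) ^ 2) with hI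
  have h0 := (hf.pd 0).cont
  have h1 := (hf.pd 1).cont
  have hG : (GG Ω f) ^ (1/2 : ℝ) ≤ ENNReal.ofReal (√2 * √I) := by
    have : GG Ω f ≤ ENNReal.ofReal (2 * I) := by
      rw [hI, ← integral_const_mul, ofReal_integral_eq_lintegral_ofReal]
      · unfold GG
        apply lintegral_mono
        intro x
        beta_reduce
        rw [ENNReal.ofReal_rpow_of_nonneg (by positivity) (by norm_num)]
        apply ENNReal.ofReal_le_ofReal
        norm_cast
        rw [← sq_abs (pd 0 f x), ← sq_abs (pd 1 f x)]
        nlinarith [sq_nonneg (|pd 0 f x| - |pd 1 f x|)]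
      · exact h.intOn (continuous_const.mul ((h0.pow 2).add (h1.pow 2)))
      · exact Eventually.of_forall fun x => by positivity
    calc _ ≤ (ENNReal.ofReal (2 * I)) ^ (1/2 : ℝ) := ENNReal.rpow_le_rpow this (by norm_num)
      _ = _ := by
        have hI0 : 0 ≤ I := integral_nonneg fun x => by positivity
        rw [ENNReal.ofReal_rpow_of_nonneg (by positivity) (by norm_num), ← Real.sqrt_eq_rpow,
          Real.sqrt_mul (by norm_num)]
  have hfc : Continuous fun x => f x - avg Ω f := hf.cont.sub continuous_const
  have hle : eLpNorm f (ENNReal.ofReal p) (volume.restrict Ω) ≤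
      C * ENNReal.ofReal (√2 * √I) * W + ‖avg Ω f‖ₑ * W' := by
    have e : f = (fun x => f x - avg Ω f) + fun _ => avg Ω f := by ext x; simp
    calc eLpNorm f (ENNReal.ofReal p) (volume.restrict Ω)
        = eLpNorm ((fun x => f x - avg Ω f) + fun _ => avg Ω f) (ENNReal.ofReal p)
          (volume.restrict Ω) := by rw [← e]
      _ ≤ eLpNorm (fun x => f x - avg Ω f) (ENNReal.ofReal p) (volume.restrict Ω)
          + eLpNorm (fun _ => avg Ω f) (ENNReal.ofReal p) (volume.restrict Ω) :=
          eLpNorm_add_le hfc.aestronglyMeasurable aestronglyMeasurable_const (by simpa using hp)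
      _ ≤ _ := by
        gcongr
        · have := eLpNorm_le_eLpNorm_mul_rpow_measure_univ (μ := volume.restrict Ω)
            (p := ENNReal.ofReal p) (q := ENNReal.ofReal q)
            (ENNReal.ofReal_le_ofReal (le_max_left _ _))
            (f := fun x => f x - avg Ω f) hfc.aestronglyMeasurable
          rw [ENNReal.toReal_ofReal (by linarith),
            ENNReal.toReal_ofReal (by linarith [le_max_left p 2]),
            Measure.restrict_apply MeasurableSet.univ, univ_inter] at this
          refine this.trans ?_
          gcongr
          exact (hP f hf).trans (by gcongr)
        · rw [eLpNorm_const' _ (by simp; linarith) (by simp),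
            ENNReal.toReal_ofReal (by linarith), Measure.restrict_apply MeasurableSet.univ,
            univ_inter]
  rw [h.LpS_eq hf.cont hp]
  have ht1 : C * ENNReal.ofReal (√2 * √I) * W ≠ ⊤ :=
    ENNReal.mul_ne_top (ENNReal.mul_ne_top hC ENNReal.ofReal_ne_top) hWt
  have ht2 : ‖avg Ω f‖ₑ * W' ≠ ⊤ := ENNReal.mul_ne_top (by simp) hWt'
  have := ENNReal.toReal_mono (ENNReal.add_ne_top.2 ⟨ht1, ht2⟩) hle
  rw [ENNReal.toReal_add ht1 ht2, ENNReal.toReal_mul, ENNReal.toReal_mul, ENNReal.toReal_mul,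
    ENNReal.toReal_ofReal (by positivity)] at this
  refine this.trans ?_
  have ea : ‖avg Ω f‖ₑ.toReal = V.toReal⁻¹ * |∫ x in Ω, f x| := by
    rw [toReal_enorm, Real.norm_eq_abs, avg, abs_div, abs_of_nonneg ENNReal.toReal_nonneg]
    rw [div_eq_inv_mul]
  rw [ea]
  have p1 : 0 ≤ C.toReal * W.toReal * √2 * |∫ x in Ω, f x| := by positivity
  have p2 : 0 ≤ V.toReal⁻¹ * W'.toReal * √I := by positivity
  nlinarith

end Dfn

lemma sm_slice {f : ℝ → V2 → ℝ} (hf : Smooth2 f) (t : ℝ) : Sm (f t) :=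
  ContDiff.comp (g := fun p : ℝ × V2 => f p.1 p.2) hf (contDiff_const.prodMk contDiff_id)

lemma hasDeriv_slice {f : ℝ → V2 → ℝ} (hf : Smooth2 f) (t : ℝ) (x : V2) :
    HasDerivAt (fun s => f s x) (fderiv ℝ (fun p : ℝ × V2 => f p.1 p.2) (t, x) (1, 0)) t := by
  have h1 : HasFDerivAt (fun p : ℝ × V2 => f p.1 p.2) _ (t, x) :=
    ((ContDiff.differentiable hf (by simp)) (t, x)).hasFDerivAt
  exact h1.comp_hasDerivAt t ((hasDerivAt_id t).prodMk (hasDerivAt_const t x))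

lemma sm_dt {f : ℝ → V2 → ℝ} (hf : Smooth2 f) (t : ℝ) : Sm (dt f t) := by
  have : dt f t = fun x => fderiv ℝ (fun p : ℝ × V2 => f p.1 p.2) (t, x) (1, 0) := by
    ext x; exact (hasDeriv_slice hf t x).deriv
  rw [this]
  have h1 := (ContDiff.fderiv_right (m := (⊤ : ℕ∞)) hf (by simp)).clm_apply
    (contDiff_const (c := ((1, 0) : ℝ × V2)))
  exact h1.comp (contDiff_const.prodMk contDiff_id)

lemma sm_matD {u : ℝ → V2 → V2} (hu : Smooth2V u) (t : ℝ) (i : Fin 2) :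
    Sm (fun x => matD u t x i) := by
  have hs := fun j => sm_slice (hu j) t
  unfold matD dot grad
  simp only [Fin.sum_univ_two]
  exact (sm_dt (hu i) t).add (((hs 0).mul ((hs i).pd 0)).add ((hs 1).mul ((hs i).pd 1)))

namespace Dfn

lemma matD_bdry {Ω : Set V2} {φ : V2 → ℝ} (h : Dfn Ω φ) {u : ℝ → V2 → V2} (hu : Smooth2V u)
    {T t : ℝ} (ht : t ∈ Ioc 0 T)
    (hs : ∀ s ∈ Ioc 0 T, ∀ x ∈ frontier Ω, u s x 0 * pd 0 φ x + u s x 1 * pd 1 φ x = 0)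
    {x : V2} (hx : x ∈ frontier Ω) :
    matD u t x 0 * pd 0 φ x + matD u t x 1 * pd 1 φ x
      = - ∑ k, ∑ l, pd k (pd l φ) x * (u t x k * u t x l) := by
  have hsl := fun j => sm_slice (hu j) t
  have h1 : dt (fun s y => u s y 0) t x * pd 0 φ x + dt (fun s y => u s y 1) t x * pd 1 φ x = 0 := by
    have d := fun j => (hasDeriv_slice (hu j) t x).differentiableAt.hasDerivAt
    have e := ((d 0).mul_const (pd 0 φ x)).add ((d 1).mul_const (pd 1 φ x))
    have e1 := e.hasDerivWithinAt (s := Ioc 0 T)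
    have e2 : HasDerivWithinAt (fun _ => (0:ℝ)) 0 (Ioc 0 T) t := hasDerivWithinAt_const _ _ _
    have e3 : HasDerivWithinAt (fun _ => (0:ℝ)) _ (Ioc 0 T) t :=
      e1.congr_of_mem (fun s hs' => (hs s hs' x hx).symm) ht
    exact ((uniqueDiffOn_Ioc 0 T) t ht).eq_deriv _ e3 e2
  have h2 := h.tangent (G := fun x => u t x 0 * pd 0 φ x + u t x 1 * pd 1 φ x)
    (((hsl 0).mul (h.sm.pd 0)).add ((hsl 1).mul (h.sm.pd 1))) (fun y hy => hs t ht y hy) hx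
    (hs t ht x hx)
  have e : ∀ i, pd i (fun x => u t x 0 * pd 0 φ x + u t x 1 * pd 1 φ x) x
      = pd i (fun y => u t y 0) x * pd 0 φ x + u t x 0 * pd i (pd 0 φ) x
       + (pd i (fun y => u t y 1) x * pd 1 φ x + u t x 1 * pd i (pd 1 φ) x) := by
    intro i
    rw [pd_add ((hsl 0).mul (h.sm.pd 0)).diff ((hsl 1).mul (h.sm.pd 1)).diff,
      pd_mul (hsl 0).diff (h.sm.pd 0).diff, pd_mul (hsl 1).diff (h.sm.pd 1).diff]
  rw [e, e] at h2
  simp only [matD, dot, grad, Fin.sum_univ_two]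
  linear_combination h1 + h2

lemma bound {Ω : Set V2} {φ : V2 → ℝ} (h : Dfn Ω φ) {f : V2 → ℝ} (hf : Continuous f) :
    ∃ K, 0 ≤ K ∧ ∀ x ∈ Ω, |f x| ≤ K := by
  obtain ⟨K, hK⟩ := h.compact.exists_bound_of_continuousOn hf.continuousOn
  exact ⟨max K 0, le_max_right _ _, fun x hx => (hK x (subset_closure hx)).trans (le_max_left _ _)⟩

lemma term_bound {Ω : Set V2} {φ : V2 → ℝ} (h : Dfn Ω φ) {A : V2 → ℝ} (hA : Sm A) (k l : Fin 2) :
    ∃ K, 0 ≤ K ∧ ∀ u : V2 → V2, (∀ i, Sm fun x => u x i) → ∀ x ∈ Ω,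
      |A x * (u x k * u x l)| ≤ K * nsq (u x) ∧
      ∀ i, |pd i (fun x => A x * (u x k * u x l)) x| ≤ K * (nsq (u x) + gnsq u x) := by
  obtain ⟨K, hK0, hK⟩ := h.bound hA.cont
  obtain ⟨K0, hK00, hK0'⟩ := h.bound (hA.pd 0).cont
  obtain ⟨K1, hK10, hK1'⟩ := h.bound (hA.pd 1).cont
  refine ⟨K + K0 + K1, by positivity, fun u hu x hx => ?_⟩
  have uu : |u x k * u x l| ≤ nsq (u x) := by
    rw [abs_le]; simp only [nsq, Fin.sum_univ_two]
    fin_cases k <;> fin_cases l <;> simp <;> constructor <;>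
      nlinarith [sq_nonneg (u x 0 - u x 1), sq_nonneg (u x 0 + u x 1), sq_nonneg (u x 0), sq_nonneg (u x 1)]
  have n0 : 0 ≤ nsq (u x) := by unfold nsq; positivity
  have g0 : 0 ≤ gnsq u x := by unfold gnsq; positivity
  have nk : ∀ k, (u x k)^2 ≤ nsq (u x) := by
    intro k; simp only [nsq, Fin.sum_univ_two]
    fin_cases k <;> simp <;> positivity
  have gk : ∀ i k, (pd i (fun y => u y k) x)^2 ≤ gnsq u x := by
    intro i k; simp only [gnsq, Fin.sum_univ_two]
    fin_cases k <;> fin_cases i <;> simp <;> nlinarith [sq_nonneg (pd 0 (fun y => u y 0) x),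
      sq_nonneg (pd 0 (fun y => u y 1) x), sq_nonneg (pd 1 (fun y => u y 0) x),
      sq_nonneg (pd 1 (fun y => u y 1) x)]
  constructor
  · rw [abs_mul]
    apply mul_le_mul _ uu (abs_nonneg _) (by positivity)
    linarith [hK x hx]
  · intro i
    rw [pd_mul hA.diff ((hu k).mul (hu l)).diff, pd_mul (hu k).diff (hu l).diff]
    have a1 : |pd i A x| ≤ K0 + K1 := by
      fin_cases i
      · simpa using (hK0' x hx).trans (by linarith)
      · simpa using (hK1' x hx).trans (by linarith)
    have a2 : |pd i (fun y => u y k) x * u x l + u x k * pd i (fun y => u y l) x|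
        ≤ nsq (u x) + gnsq u x := by
      have := nk k; have := nk l; have := gk i k; have := gk i l
      rw [abs_le]; constructor <;>
      nlinarith [sq_nonneg (pd i (fun y => u y k) x + u x l), sq_nonneg (pd i (fun y => u y k) x - u x l),
        sq_nonneg (pd i (fun y => u y l) x + u x k), sq_nonneg (pd i (fun y => u y l) x - u x k)]
    calc _ ≤ |pd i A x * (u x k * u x l)| + |A x * (pd i (fun y => u y k) x * u x l + u x k * pd i (fun y => u y l) x)| := abs_add_le _ _
      _ ≤ (K0 + K1) * (nsq (u x) + gnsq u x) + K * (nsq (u x) + gnsq u x) := by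
        rw [abs_mul, abs_mul (A x)]
        apply add_le_add
        · exact mul_le_mul a1 (uu.trans (by linarith)) (abs_nonneg _) (by positivity)
        · exact mul_le_mul (hK x hx) a2 (abs_nonneg _) (by positivity)
      _ = _ := by ring

lemma corr {Ω : Set V2} {φ : V2 → ℝ} (h : Dfn Ω φ) :
    ∃ M, 0 ≤ M ∧ ∀ u : V2 → V2, (∀ i, Sm fun x => u x i) → ∃ H : V2 → V2,
      (∀ i, Sm fun x => H x i) ∧
      (∀ x ∈ frontier Ω, H x 0 * pd 0 φ x + H x 1 * pd 1 φ x
        = - ∑ k, ∑ l, pd k (pd l φ) x * (u x k * u x l)) ∧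
      ∀ x ∈ Ω, ∀ j, |H x j| ≤ M * nsq (u x) ∧
        ∀ i, |pd i (fun y => H y j) x| ≤ M * (nsq (u x) + gnsq u x) := by
  set D : V2 → ℝ := fun x => pd 0 φ x * pd 0 φ x + pd 1 φ x * pd 1 φ x + φ x * φ x with hD
  have hDs : Sm D := (((h.sm.pd 0).mul (h.sm.pd 0)).add ((h.sm.pd 1).mul (h.sm.pd 1))).add
    (h.sm.mul h.sm)
  have hD0 : ∀ x, D x ≠ 0 := by
    intro x
    by_cases hx : φ x = 0
    · have := h.grad_pos (x := x) (by rw [h.fr]; exact hx)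
      simp only [hD, hx]; linarith
    · have : 0 < φ x * φ x := mul_self_pos.2 hx
      simp only [hD]; nlinarith [mul_self_nonneg (pd 0 φ x), mul_self_nonneg (pd 1 φ x)]
  have hm : Sm (fun x => (D x)⁻¹) := ContDiff.inv hDs hD0
  set A : Fin 2 → Fin 2 → Fin 2 → V2 → ℝ := fun j k l x =>
    -((D x)⁻¹ * pd j φ x * pd k (pd l φ) x) with hAdef
  have hA : ∀ j k l, Sm (A j k l) := fun j k l =>
    ((hm.mul (h.sm.pd j)).mul ((h.sm.pd l).pd k)).neg
  choose K hK0 hK using fun j k l => h.term_bound (hA j k l) k l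
  set M := ∑ j, ∑ k, ∑ l, K j k l with hM
  refine ⟨M, Finset.sum_nonneg fun j _ => Finset.sum_nonneg fun k _ => Finset.sum_nonneg fun l _ => hK0 j k l, fun u hu => ?_⟩
  have ht : ∀ j k l, Sm fun x => A j k l x * (u x k * u x l) := fun j k l =>
    (hA j k l).mul ((hu k).mul (hu l))
  refine ⟨fun x j => (A j 0 0 x * (u x 0 * u x 0) + A j 0 1 x * (u x 0 * u x 1)) +
    (A j 1 0 x * (u x 1 * u x 0) + A j 1 1 x * (u x 1 * u x 1)), fun j => ?_, ?_, ?_⟩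
  · exact ((ht j 0 0).add (ht j 0 1)).add ((ht j 1 0).add (ht j 1 1))
  · intro x hx
    have hφ : φ x = 0 := by rw [h.fr] at hx; exact hx
    have e : (D x)⁻¹ * (pd 0 φ x * pd 0 φ x + pd 1 φ x * pd 1 φ x) = 1 := by
      have : D x = pd 0 φ x * pd 0 φ x + pd 1 φ x * pd 1 φ x := by simp [hD, hφ]
      rw [← this]; exact inv_mul_cancel₀ (hD0 x)
    simp only [hAdef, Fin.sum_univ_two]
    linear_combination (-(pd 0 (pd 0 φ) x * (u x 0 * u x 0) + pd 0 (pd 1 φ) x * (u x 0 * u x 1) +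
      (pd 1 (pd 0 φ) x * (u x 1 * u x 0) + pd 1 (pd 1 φ) x * (u x 1 * u x 1)))) * e
  · intro x hx j
    have n0 : 0 ≤ nsq (u x) := by unfold nsq; positivity
    have g0 : 0 ≤ gnsq u x := by unfold gnsq; positivity
    have hMj : K j 0 0 + K j 0 1 + (K j 1 0 + K j 1 1) ≤ M := by
      have : ∑ k, ∑ l, K j k l ≤ M := Finset.single_le_sum (f := fun j => ∑ k, ∑ l, K j k l)
        (fun j _ => Finset.sum_nonneg fun k _ => Finset.sum_nonneg fun l _ => hK0 j k l) (Finset.mem_univ j)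
      simpa [Fin.sum_univ_two] using this
    have fin4 : ∀ {a b c d : ℝ} {N : ℝ}, 0 ≤ N → |a| ≤ K j 0 0 * N → |b| ≤ K j 0 1 * N →
        |c| ≤ K j 1 0 * N → |d| ≤ K j 1 1 * N → |a + b + (c + d)| ≤ M * N := by
      intro a b c d N hN ha hb hc hd
      have := abs_add_le (a+b) (c+d)
      have := abs_add_le a b
      have := abs_add_le c d
      nlinarith [mul_le_mul_of_nonneg_right hMj hN]
    have k := fun k l => hK j k l u hu x hx
    refine ⟨fin4 n0 (k 0 0).1 (k 0 1).1 (k 1 0).1 (k 1 1).1, fun i => ?_⟩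
    rw [pd_add ((ht j 0 0).add (ht j 0 1)).diff ((ht j 1 0).add (ht j 1 1)).diff,
      pd_add (ht j 0 0).diff (ht j 0 1).diff, pd_add (ht j 1 0).diff (ht j 1 1).diff]
    exact fin4 (by positivity) ((k 0 0).2 i) ((k 0 1).2 i) ((k 1 0).2 i) ((k 1 1).2 i)

end Dfn

lemma nsq_nonneg (a : V2) : 0 ≤ nsq a := by unfold nsq; positivity
lemma gnsq_nonneg (u : V2 → V2) (x : V2) : 0 ≤ gnsq u x := by unfold gnsq; positivity

lemma nsq_cont {u : V2 → V2} (hu : ∀ i, Sm fun x => u x i) : Continuous fun x => nsq (u x) := by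
  simp only [nsq, Fin.sum_univ_two]
  exact ((hu 0).cont.pow 2).add ((hu 1).cont.pow 2)

lemma gnsq_cont {u : V2 → V2} (hu : ∀ i, Sm fun x => u x i) : Continuous fun x => gnsq u x := by
  simp only [gnsq, Fin.sum_univ_two]
  exact ((((hu 0).pd 0).cont.pow 2).add (((hu 0).pd 1).cont.pow 2)).add
    ((((hu 1).pd 0).cont.pow 2).add (((hu 1).pd 1).cont.pow 2))

lemma div_cont {u : V2 → V2} (hu : ∀ i, Sm fun x => u x i) : Continuous fun x => div2 u x := by
  simp only [div2, Fin.sum_univ_two]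
  exact ((hu 0).pd 0).cont.add ((hu 1).pd 1).cont

lemma curl_cont {u : V2 → V2} (hu : ∀ i, Sm fun x => u x i) : Continuous fun x => curl2 u x := by
  simp only [curl2]
  exact ((hu 1).pd 0).cont.sub ((hu 0).pd 1).cont

lemma div_sq_le (u : V2 → V2) (x : V2) : (div2 u x)^2 ≤ 2 * gnsq u x := by
  simp only [div2, gnsq, Fin.sum_univ_two]
  nlinarith [sq_nonneg (pd 0 (fun y => u y 0) x - pd 1 (fun y => u y 1) x),
    sq_nonneg (pd 1 (fun y => u y 0) x), sq_nonneg (pd 0 (fun y => u y 1) x)]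

lemma curl_sq_le (u : V2 → V2) (x : V2) : (curl2 u x)^2 ≤ 2 * gnsq u x := by
  simp only [curl2, gnsq, Fin.sum_univ_two]
  nlinarith [sq_nonneg (pd 0 (fun y => u y 1) x + pd 1 (fun y => u y 0) x),
    sq_nonneg (pd 0 (fun y => u y 0) x), sq_nonneg (pd 1 (fun y => u y 1) x)]

namespace Dfn
variable {Ω : Set V2} {φ : V2 → ℝ}

lemma mono (h : Dfn Ω φ) {f g : V2 → ℝ} (hf : Continuous f) (hg : Continuous g)
    (hfg : ∀ x ∈ Ω, f x ≤ g x) : ∫ x in Ω, f x ≤ ∫ x in Ω, g x :=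
  setIntegral_mono_on (h.intOn hf) (h.intOn hg) h.meas hfg

lemma cs (h : Dfn Ω φ) (hne : Ω.Nonempty) {f : V2 → ℝ} (hf : Continuous f) :
    (∫ x in Ω, f x)^2 ≤ (volume Ω).toReal * ∫ x in Ω, (f x)^2 := by
  set V := (volume Ω).toReal with hV
  have hV0 : 0 < V := ENNReal.toReal_pos (h.vol_pos hne) h.vol_lt.ne
  set J := ∫ x in Ω, f x with hI
  have h1 : 0 ≤ ∫ x in Ω, (V * f x - J)^2 := integral_nonneg fun x => sq_nonneg _
  have h2 : ∫ x in Ω, (V * f x - J)^2 = V^2 * (∫ x in Ω, (f x)^2) - 2 * V * J * J + J^2 * V := by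
    have e : ∀ x, (V * f x - J)^2 = V^2 * (f x)^2 - 2 * V * J * f x + J^2 := fun x => by ring
    simp only [e]
    rw [integral_add, integral_sub, integral_const_mul, integral_const_mul, setIntegral_const]
    · simp only [smul_eq_mul, Measure.real, ← hV]; ring
    · exact h.intOn (continuous_const.mul (hf.pow 2))
    · exact h.intOn (continuous_const.mul hf)
    · exact h.intOn ((continuous_const.mul (hf.pow 2)).sub (continuous_const.mul hf))
    · exact h.intOn continuous_const
  rw [h2] at h1
  have : 0 ≤ V * (V * (∫ x in Ω, (f x)^2) - J^2) := by nlinarith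
  have := nonneg_of_mul_nonneg_right this hV0
  linarith

lemma abs_le_sqrt (h : Dfn Ω φ) (hne : Ω.Nonempty) {f : V2 → ℝ} (hf : Continuous f) :
    ∫ x in Ω, |f x| ≤ √(volume Ω).toReal * √(∫ x in Ω, (f x)^2) := by
  have := h.cs hne hf.abs
  simp only [sq_abs] at this
  rw [← Real.sqrt_mul ENNReal.toReal_nonneg]
  exact Real.le_sqrt_of_sq_le this

lemma div_abs (h : Dfn Ω φ) (hne : Ω.Nonempty) {u : V2 → V2} (hu : ∀ i, Sm fun x => u x i) :
    ∫ x in Ω, |div2 u x| ≤ √(volume Ω).toReal * √2 * √(∫ x in Ω, gnsq u x) := by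
  refine (h.abs_le_sqrt hne (div_cont hu)).trans ?_
  rw [mul_assoc, ← Real.sqrt_mul (x := 2) (by norm_num)]
  refine mul_le_mul_of_nonneg_left (Real.sqrt_le_sqrt ?_) (Real.sqrt_nonneg _)
  rw [← integral_const_mul]
  exact h.mono ((div_cont hu).pow 2) (continuous_const.mul (gnsq_cont hu)) fun x _ => div_sq_le u x

lemma mean_bd (h : Dfn Ω φ) : ∃ R, 0 ≤ R ∧ ∀ w : V2 → V2, (∀ i, Sm fun x => w x i) →
    (∀ x ∈ frontier Ω, w x 0 * pd 0 φ x + w x 1 * pd 1 φ x = 0) → ∀ i,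
    |∫ x in Ω, w x i| ≤ R * ∫ x in Ω, |div2 w x| := by
  obtain ⟨R0, h0, hR0⟩ := h.bound (sm_coord 0).cont
  obtain ⟨R1, h1, hR1⟩ := h.bound (sm_coord 1).cont
  refine ⟨R0 + R1, by positivity, fun w hw hb i => ?_⟩
  rw [h.mean_eq hw hb i, abs_neg, ← integral_const_mul]
  refine (abs_integral_le_integral_abs).trans ?_
  refine h.mono ((sm_coord i).cont.mul (div_cont hw)).abs (continuous_const.mul (div_cont hw).abs)
    fun x hx => ?_
  rw [abs_mul]
  gcongr
  fin_cases i
  · exact (hR0 x hx).trans (by linarith)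
  · exact (hR1 x hx).trans (by linarith)

lemma comp_le (h : Dfn Ω φ) {u : V2 → V2} (hu : ∀ i, Sm fun x => u x i) (i : Fin 2) :
    ∫ x in Ω, ((pd 0 (fun y => u y i) x)^2 + (pd 1 (fun y => u y i) x)^2) ≤ ∫ x in Ω, gnsq u x := by
  refine h.mono ((((hu i).pd 0).cont.pow 2).add (((hu i).pd 1).cont.pow 2)) (gnsq_cont hu)
    fun x _ => ?_
  simp only [gnsq, Fin.sum_univ_two]
  fin_cases i <;> simp <;> positivity

lemma tang_sob (h : Dfn Ω φ) (hc : Convex ℝ Ω) (hne : Ω.Nonempty) {p : ℝ} (hp : 1 ≤ p) :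
    ∃ C, 0 ≤ C ∧ ∀ w : V2 → V2, (∀ i, Sm fun x => w x i) →
    (∀ x ∈ frontier Ω, w x 0 * pd 0 φ x + w x 1 * pd 1 φ x = 0) → ∀ i,
    LpS p Ω (fun x => w x i) ≤ C * √(∫ x in Ω, gnsq w x) := by
  obtain ⟨C, hC0, hC⟩ := h.sobolev hc hne hp
  obtain ⟨R, hR0, hR⟩ := h.mean_bd
  refine ⟨C * (1 + R * (√(volume Ω).toReal * √2)), by positivity, fun w hw hb i => ?_⟩
  refine (hC _ (hw i)).trans ?_
  rw [mul_assoc]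
  gcongr
  have h1 := Real.sqrt_le_sqrt (h.comp_le hw i)
  have h2 := hR w hw hb i
  have h3 := mul_le_mul_of_nonneg_left (h.div_abs hne hw) hR0
  linarith

lemma LpS_two (f : V2 → ℝ) : LpS 2 Ω f = √(∫ x in Ω, (f x)^2) := by
  unfold LpS
  rw [Real.sqrt_eq_rpow]
  congr 2
  ext x
  norm_cast
  exact sq_abs _

lemma LpS_four (f : V2 → ℝ) : (LpS 4 Ω f)^4 = ∫ x in Ω, (f x)^4 := by
  have e : ∫ x in Ω, |f x| ^ (4:ℝ) = ∫ x in Ω, (f x)^4 := by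
    congr 1; ext x; norm_cast; exact Even.pow_abs (by decide) _
  unfold LpS
  rw [e, ← Real.rpow_natCast, ← Real.rpow_mul]
  · norm_num
  · exact integral_nonneg fun x => by positivity

lemma LpG_two (u : V2 → V2) : LpG 2 Ω u = √(∫ x in Ω, gnsq u x) := by
  unfold LpG
  rw [Real.sqrt_eq_rpow]
  simp

lemma LpG_two_sq (u : V2 → V2) : (LpG 2 Ω u)^2 = ∫ x in Ω, gnsq u x := by
  rw [LpG_two, Real.sq_sqrt]
  exact integral_nonneg fun x => gnsq_nonneg _ _

lemma LpG_four_sq (u : V2 → V2) : (LpG 4 Ω u)^2 = √(∫ x in Ω, (gnsq u x)^2) := by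
  have e : ∫ x in Ω, (gnsq u x) ^ ((4:ℝ)/2) = ∫ x in Ω, (gnsq u x)^2 := by
    congr 1; ext x; norm_num
  unfold LpG
  rw [e, Real.sqrt_eq_rpow, ← Real.rpow_natCast, ← Real.rpow_mul]
  · norm_num
  · exact integral_nonneg fun x => by positivity

lemma LpV_le (h : Dfn Ω φ) {u : V2 → V2} (hu : ∀ i, Sm fun x => u x i) {p : ℝ} (hp : 1 ≤ p) :
    LpV p Ω u ≤ LpS p Ω (fun x => u x 0) + LpS p Ω (fun x => u x 1) := by
  have e : LpV p Ω u = LpS p Ω (fun x => √(nsq (u x))) := by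
    unfold LpV LpS
    congr 2
    ext x
    rw [abs_of_nonneg (Real.sqrt_nonneg _), Real.sqrt_eq_rpow, ← Real.rpow_mul (nsq_nonneg _)]
    congr 1; ring
  rw [e, h.LpS_eq (nsq_cont hu).sqrt hp, h.LpS_eq (hu 0).cont hp, h.LpS_eq (hu 1).cont hp,
    ← ENNReal.toReal_add (h.memLp (hu 0).cont _).2.ne (h.memLp (hu 1).cont _).2.ne]
  apply ENNReal.toReal_mono
    (ENNReal.add_ne_top.2 ⟨(h.memLp (hu 0).cont _).2.ne, (h.memLp (hu 1).cont _).2.ne⟩)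
  have h1 : eLpNorm (fun x => √(nsq (u x))) (ENNReal.ofReal p) (volume.restrict Ω)
      ≤ eLpNorm ((fun x => ‖u x 0‖) + fun x => ‖u x 1‖) (ENNReal.ofReal p) (volume.restrict Ω) := by
    apply eLpNorm_mono_real
    intro x
    simp only [Pi.add_apply, Real.norm_eq_abs]
    rw [abs_of_nonneg (Real.sqrt_nonneg _)]
    apply Real.sqrt_le_iff.2 ⟨by positivity, ?_⟩
    simp only [nsq, Fin.sum_univ_two]
    rw [← sq_abs (u x 0), ← sq_abs (u x 1)]
    nlinarith [mul_nonneg (abs_nonneg (u x 0)) (abs_nonneg (u x 1))]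
  refine h1.trans ((eLpNorm_add_le (hu 0).cont.norm.aestronglyMeasurable
    (hu 1).cont.norm.aestronglyMeasurable (by simpa using hp)).trans ?_)
  rw [eLpNorm_norm, eLpNorm_norm]

lemma u_bd (h : Dfn Ω φ) (hc : Convex ℝ Ω) (hne : Ω.Nonempty) :
    ∃ C, 0 ≤ C ∧ ∀ w : V2 → V2, (∀ i, Sm fun x => w x i) →
    (∀ x ∈ frontier Ω, w x 0 * pd 0 φ x + w x 1 * pd 1 φ x = 0) →
    ∫ x in Ω, nsq (w x) ≤ C * ∫ x in Ω, gnsq w x ∧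
    ∫ x in Ω, (nsq (w x))^2 ≤ C * (∫ x in Ω, gnsq w x)^2 := by
  obtain ⟨C2, hC20, hC2⟩ := h.tang_sob hc hne (p := 2) (by norm_num)
  obtain ⟨C4, hC40, hC4⟩ := h.tang_sob hc hne (p := 4) (by norm_num)
  refine ⟨2 * C2^2 + 4 * C4^4, by positivity, fun w hw hb => ?_⟩
  set E := ∫ x in Ω, gnsq w x with hE
  have hE0 : 0 ≤ E := integral_nonneg fun x => gnsq_nonneg _ _
  have a2 : ∀ i, ∫ x in Ω, (w x i)^2 ≤ C2^2 * E := by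
    intro i
    have := hC2 w hw hb i
    rw [LpS_two] at this
    have i0 : 0 ≤ ∫ x in Ω, (w x i)^2 := integral_nonneg fun x => sq_nonneg _
    calc _ = (√(∫ x in Ω, (w x i)^2))^2 := (Real.sq_sqrt i0).symm
      _ ≤ (C2 * √E)^2 := by gcongr
      _ = _ := by rw [mul_pow, Real.sq_sqrt hE0]
  have a4 : ∀ i, ∫ x in Ω, (w x i)^4 ≤ C4^4 * E^2 := by
    intro i
    have := hC4 w hw hb i
    rw [← LpS_four]
    have n0 : 0 ≤ LpS 4 Ω fun x => w x i := by
      unfold LpS; exact Real.rpow_nonneg (integral_nonneg fun x => by positivity) _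
    calc _ ≤ (C4 * √E)^4 := by gcongr
      _ = C4^4 * ((√E)^2)^2 := by ring
      _ = _ := by rw [Real.sq_sqrt hE0]
  constructor
  · have : ∫ x in Ω, nsq (w x) = (∫ x in Ω, (w x 0)^2) + ∫ x in Ω, (w x 1)^2 := by
      simp only [nsq, Fin.sum_univ_two]
      exact integral_add (h.intOn ((hw 0).cont.pow 2)) (h.intOn ((hw 1).cont.pow 2))
    rw [this]
    have : 0 ≤ 4 * C4^4 * E := by positivity
    nlinarith [a2 0, a2 1]
  · have : ∫ x in Ω, (nsq (w x))^2 ≤ ∫ x in Ω, (2 * (w x 0)^4 + 2 * (w x 1)^4) := by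
      refine h.mono ((nsq_cont hw).pow 2) ((continuous_const.mul ((hw 0).cont.pow 4)).add
        (continuous_const.mul ((hw 1).cont.pow 4))) fun x _ => ?_
      simp only [nsq, Fin.sum_univ_two]
      nlinarith [sq_nonneg ((w x 0)^2 - (w x 1)^2)]
    have c0 := (hw 0).cont
    have c1 := (hw 1).cont
    rw [integral_add, integral_const_mul, integral_const_mul] at this
    any_goals exact h.intOn (by fun_prop)
    have : 0 ≤ 2 * C2^2 * E^2 := by positivity
    nlinarith [a4 0, a4 1]

/-- the two core estimates -/
lemma core (h : Dfn Ω φ) (hc : Convex ℝ Ω) (hne : Ω.Nonempty) :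
    ∃ K, 0 ≤ K ∧ ∀ u v : V2 → V2, (∀ i, Sm fun x => u x i) → (∀ i, Sm fun x => v x i) →
    (∀ x ∈ frontier Ω, u x 0 * pd 0 φ x + u x 1 * pd 1 φ x = 0) →
    (∀ x ∈ frontier Ω, v x 0 * pd 0 φ x + v x 1 * pd 1 φ x
        = - ∑ k, ∑ l, pd k (pd l φ) x * (u x k * u x l)) →
    ∫ x in Ω, gnsq v x ≤ 4 * (∫ x in Ω, (div2 v x)^2) + 4 * (∫ x in Ω, (curl2 v x)^2)
      + K * ∫ x in Ω, (gnsq u x)^2 ∧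
    ∀ i, |∫ x in Ω, v x i| ≤ K * (√(∫ x in Ω, gnsq v x) + ∫ x in Ω, gnsq u x) := by
  obtain ⟨M, hM0, hM⟩ := h.corr
  obtain ⟨C, hC0, hC⟩ := h.u_bd hc hne
  obtain ⟨R, hR0, hR⟩ := h.mean_bd
  set V := (volume Ω).toReal with hV
  have hV0 : 0 ≤ V := ENNReal.toReal_nonneg
  refine ⟨18 * (8 * M^2 * (C * V + 1)) + (R * (√V * √2) + (R * (2 * M * (C + 1)) + M * C)),
    by positivity, fun u v hu hv hub hvb => ?_⟩
  obtain ⟨H, hH, hHb, hHe⟩ := hM u hu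
  obtain ⟨hN2, hN4⟩ := hC u hu hub
  set E2 := ∫ x in Ω, gnsq u x with hE2
  set E4 := ∫ x in Ω, (gnsq u x)^2 with hE4
  have hE20 : 0 ≤ E2 := integral_nonneg fun x => gnsq_nonneg _ _
  have hE40 : 0 ≤ E4 := integral_nonneg fun x => sq_nonneg _
  have hE : E2^2 ≤ V * E4 := h.cs hne (gnsq_cont hu)
  set w : V2 → V2 := fun x i => v x i - H x i with hw
  have hws : ∀ i, Sm fun x => w x i := fun i => (hv i).sub (hH i)
  have hwb : ∀ x ∈ frontier Ω, w x 0 * pd 0 φ x + w x 1 * pd 1 φ x = 0 := by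
    intro x hx
    have a := hvb x hx
    have b := hHb x hx
    simp only [hw]; linear_combination a - b
  have hpd : ∀ i j x, pd i (fun y => w y j) x = pd i (fun y => v y j) x - pd i (fun y => H y j) x :=
    fun i j x => pd_sub (hv j).diff (hH j).diff i x
  have hdiv : ∀ x, div2 w x = div2 v x - div2 H x := by
    intro x; simp only [div2, Fin.sum_univ_two, hpd]; ring
  have hcurl : ∀ x, curl2 w x = curl2 v x - curl2 H x := by
    intro x; simp only [curl2, hpd]; ring
  have gH : ∀ x ∈ Ω, gnsq H x ≤ 8 * M^2 * ((nsq (u x))^2 + (gnsq u x)^2) := by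
    intro x hx
    have hn := nsq_nonneg (u x)
    have hg := gnsq_nonneg u x
    have k : ∀ i j, (pd i (fun y => H y j) x)^2 ≤ (M * (nsq (u x) + gnsq u x))^2 := by
      intro i j
      exact sq_le_sq.2 (((hHe x hx j).2 i).trans (le_abs_self _))
    have : gnsq H x ≤ 4 * (M * (nsq (u x) + gnsq u x))^2 := by
      simp only [gnsq, Fin.sum_univ_two]
      simp only [gnsq, Fin.sum_univ_two] at k
      linarith [k 0 0, k 0 1, k 1 0, k 1 1]
    nlinarith [mul_nonneg (sq_nonneg M) (sq_nonneg (nsq (u x) - gnsq u x))]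
  have cgH := gnsq_cont hH
  have cgu := gnsq_cont hu
  have cgv := gnsq_cont hv
  have cgw := gnsq_cont hws
  have cnu := nsq_cont hu
  have cdv := div_cont hv
  have ccv := curl_cont hv
  have iH : ∫ x in Ω, gnsq H x ≤ 8 * M^2 * (C * V + 1) * E4 := by
    have := h.mono (g := fun x => 8 * M^2 * ((nsq (u x))^2 + (gnsq u x)^2)) cgH (by fun_prop) gH
    rw [integral_const_mul, integral_add] at this
    any_goals exact h.intOn (by fun_prop)
    refine this.trans ?_
    rw [mul_assoc (8 * M^2)]
    gcongr
    have := mul_le_mul_of_nonneg_left hE hC0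
    rw [← hE4]
    linarith
  constructor
  · have hdc := h.div_curl hc hws hwb
    have s1 : ∫ x in Ω, ((div2 w x)^2 + (curl2 w x)^2) ≤
        ∫ x in Ω, (2 * (div2 v x)^2 + 2 * (curl2 v x)^2 + 8 * gnsq H x) := by
      refine h.mono (((div_cont hws).pow 2).add ((curl_cont hws).pow 2))
        (((continuous_const.mul ((div_cont hv).pow 2)).add
        (continuous_const.mul ((curl_cont hv).pow 2))).add (continuous_const.mul (gnsq_cont hH)))
        fun x _ => ?_
      rw [hdiv, hcurl]
      nlinarith [div_sq_le H x, curl_sq_le H x, sq_nonneg (div2 v x + div2 H x),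
        sq_nonneg (curl2 v x + curl2 H x)]
    replace s1 := hdc.trans s1
    rw [integral_add, integral_add, integral_const_mul, integral_const_mul,
      integral_const_mul] at s1
    any_goals exact h.intOn (by fun_prop)
    have s2 : ∫ x in Ω, gnsq v x ≤ ∫ x in Ω, (2 * gnsq w x + 2 * gnsq H x) := by
      refine h.mono (gnsq_cont hv) ((continuous_const.mul (gnsq_cont hws)).add
        (continuous_const.mul (gnsq_cont hH))) fun x _ => ?_
      have k : ∀ a b : ℝ, a^2 ≤ 2 * (a - b)^2 + 2 * b^2 := fun a b => by
        nlinarith [sq_nonneg (a - 2 * b)]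
      simp only [gnsq, Fin.sum_univ_two, hpd]
      linarith [k (pd 0 (fun y => v y 0) x) (pd 0 (fun y => H y 0) x),
        k (pd 1 (fun y => v y 0) x) (pd 1 (fun y => H y 0) x),
        k (pd 0 (fun y => v y 1) x) (pd 0 (fun y => H y 1) x),
        k (pd 1 (fun y => v y 1) x) (pd 1 (fun y => H y 1) x)]
    rw [integral_add, integral_const_mul, integral_const_mul] at s2
    any_goals exact h.intOn (by fun_prop)
    have : 0 ≤ (R * (√V * √2) + (R * (2 * M * (C + 1)) + M * C)) * E4 := by positivity
    nlinarith
  · intro i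
    have e1 : ∫ x in Ω, v x i = (∫ x in Ω, w x i) + ∫ x in Ω, H x i := by
      rw [← integral_add (h.intOn (hws i).cont) (h.intOn (hH i).cont)]
      simp [hw]
    have e2 : |∫ x in Ω, H x i| ≤ M * C * E2 := by
      refine (abs_integral_le_integral_abs).trans ?_
      refine (h.mono (g := fun x => M * nsq (u x)) (hH i).cont.abs (by fun_prop)
        fun x hx => (hHe x hx i).1).trans ?_
      rw [integral_const_mul, mul_assoc]
      gcongr
    have e3 : ∫ x in Ω, |div2 w x| ≤ √V * √2 * √(∫ x in Ω, gnsq v x) + 2 * M * (C + 1) * E2 := by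
      have a1 : ∫ x in Ω, |div2 w x| ≤ ∫ x in Ω, (|div2 v x| + 2 * M * (nsq (u x) + gnsq u x)) := by
        refine h.mono (div_cont hws).abs ((div_cont hv).abs.add (continuous_const.mul
          ((nsq_cont hu).add (gnsq_cont hu)))) fun x hx => ?_
        rw [hdiv]
        have b1 := abs_sub (div2 v x) (div2 H x)
        have b2 : |div2 H x| ≤ 2 * M * (nsq (u x) + gnsq u x) := by
          simp only [div2, Fin.sum_univ_two]
          have := abs_add_le (pd 0 (fun y => H y 0) x) (pd 1 (fun y => H y 1) x)
          linarith [(hHe x hx 0).2 0, (hHe x hx 1).2 1]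
        linarith
      rw [integral_add, integral_const_mul, integral_add] at a1
      any_goals exact h.intOn (by fun_prop)
      have a2 := h.div_abs hne hv
      have : 2 * M * ((∫ x in Ω, nsq (u x)) + E2) ≤ 2 * M * ((C + 1) * E2) := by
        gcongr; linarith
      linarith
    have e4 := hR w hws hwb i
    have e5 := mul_le_mul_of_nonneg_left e3 hR0
    have e6 := abs_add_le (∫ x in Ω, w x i) (∫ x in Ω, H x i)
    rw [e1]
    set S := √(∫ x in Ω, gnsq v x) with hS
    have hS0 : 0 ≤ S := Real.sqrt_nonneg _
    have p1 : 0 ≤ 18 * (8 * M^2 * (C * V + 1)) * (S + E2) := by positivity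
    have p2 : 0 ≤ R * (√V * √2) * E2 := by positivity
    have p3 : 0 ≤ (R * (2 * M * (C + 1)) + M * C) * S := by positivity
    linarith

end Dfn

end Aux

/-- Lemma 2.8: estimates for the material derivative.
For smooth solutions of compressible MHD with Navier-slip boundary conditions and
`p ∈ [1,∞)`, with `C = C(p, Ω)`:
(i) `‖u̇‖_{L^p} ≤ C(‖∇u̇‖_{L²} + ‖∇u‖²_{L²})`;
(ii) `‖∇u̇‖_{L²} ≤ C(‖div u̇‖_{L²} + ‖curl u̇‖_{L²} + ‖∇u‖²_{L⁴})`. -/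
theorem stmt_12
    (Ω : Set V2) (n : V2 → V2) (hΩ : SmoothDomain Ω n) (hconv : Convex ℝ Ω)
    (p : ℝ) (hp1 : 1 ≤ p) :
    ∃ C > (0:ℝ), ∀ (a γ μ lam ν T : ℝ) (ρ : ℝ → V2 → ℝ) (u B : ℝ → V2 → V2),
      0 < a → 1 < γ → 0 < μ → 0 ≤ μ + lam → 0 < ν → 0 < T →
      Smooth2 ρ → Smooth2V u → Smooth2V B →
      IsMHDSol Ω n a γ μ lam ν (Ioc 0 T) ρ u B →
      ∀ t ∈ Ioc 0 T,
        (LpV p Ω (matD u t) ≤ C * (LpG 2 Ω (matD u t) + (LpG 2 Ω (u t)) ^ 2)) ∧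
        (LpG 2 Ω (matD u t)
          ≤ C * (LpS 2 Ω (div2 (matD u t)) + LpS 2 Ω (curl2 (matD u t))
              + (LpG 4 Ω (u t)) ^ 2)) := by
  obtain ⟨φ, hφs, hφe, hφf, hφn, hφnn⟩ := hΩ.defining
  have h : Dfn Ω φ := ⟨hΩ.bounded, hφs, hφe, hφf, hφn⟩
  have hne := hΩ.nonempty
  obtain ⟨K, hK0, hK⟩ := h.core hconv hne
  obtain ⟨S, hS0, hS⟩ := h.sobolev hconv hne hp1
  refine ⟨2 * S * (1 + K) + (2 + √K), by positivity, ?_⟩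
  intro a γ μ lam ν T ρ u B _ _ _ _ _ _ _ hu _ hsol t ht
  have hb : ∀ s ∈ Ioc 0 T, ∀ x ∈ frontier Ω, u s x 0 * pd 0 φ x + u s x 1 * pd 1 φ x = 0 := by
    intro s hs x hx
    have h1 := (hsol.slipU s hs x hx).1
    rw [hφnn x hx] at h1
    have hg := h.grad_pos hx
    have hq : (0:ℝ) < √(nsq (grad φ x)) := by
      apply Real.sqrt_pos.2
      simp only [nsq, grad, Fin.sum_univ_two]; nlinarith
    have h2 : (√(nsq (grad φ x)))⁻¹ * (u s x 0 * pd 0 φ x + u s x 1 * pd 1 φ x) = 0 := by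
      rw [← h1]
      simp only [dot, Fin.sum_univ_two, Pi.smul_apply, smul_eq_mul]
      simp only [grad]
      ring
    exact (mul_eq_zero.1 h2).resolve_left (inv_pos.2 hq).ne'
  have hus : ∀ i, Sm fun x => u t x i := fun i => sm_slice (hu i) t
  have hvs : ∀ i, Sm fun x => matD u t x i := fun i => sm_matD hu t i
  obtain ⟨k1, k2⟩ := hK (u t) (matD u t) hus hvs (hb t ht) (fun x hx => h.matD_bdry hu ht hb hx)
  rw [Dfn.LpG_two_sq, Dfn.LpG_two, Dfn.LpS_two, Dfn.LpS_two, Dfn.LpG_four_sq]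
  have hE20 : 0 ≤ ∫ x in Ω, gnsq (u t) x := integral_nonneg fun x => gnsq_nonneg _ _
  have hE40 : 0 ≤ ∫ x in Ω, (gnsq (u t) x)^2 := integral_nonneg fun x => sq_nonneg _
  have hD0 : 0 ≤ ∫ x in Ω, (div2 (matD u t) x)^2 := integral_nonneg fun x => sq_nonneg _
  have hC0 : 0 ≤ ∫ x in Ω, (curl2 (matD u t) x)^2 := integral_nonneg fun x => sq_nonneg _
  have hG0 : 0 ≤ √(∫ x in Ω, gnsq (matD u t) x) := Real.sqrt_nonneg _
  constructor
  · refine (h.LpV_le hvs hp1).trans ?_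
    have c : ∀ i, LpS p Ω (fun x => matD u t x i) ≤
        S * (1 + K) * (√(∫ x in Ω, gnsq (matD u t) x) + ∫ x in Ω, gnsq (u t) x) := by
      intro i
      refine (hS _ (hvs i)).trans ?_
      rw [mul_assoc]
      refine mul_le_mul_of_nonneg_left ?_ hS0
      have := Real.sqrt_le_sqrt (h.comp_le hvs i)
      linarith [k2 i]
    have : 0 ≤ (2 + √K) * (√(∫ x in Ω, gnsq (matD u t) x) + ∫ x in Ω, gnsq (u t) x) := by
      positivity
    linarith [c 0, c 1]
  · generalize (∫ x in Ω, (div2 (matD u t) x)^2) = D at *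
    generalize (∫ x in Ω, (curl2 (matD u t) x)^2) = R at *
    generalize (∫ x in Ω, (gnsq (u t) x)^2) = E at *
    have a1 : √(∫ x in Ω, gnsq (matD u t) x) ≤ (2 + √K) * (√D + √R + √E) := by
      apply Real.sqrt_le_iff.2 ⟨by positivity, k1.trans ?_⟩
      have e1 := Real.sq_sqrt hD0
      have e2 := Real.sq_sqrt hC0
      have e3 := Real.sq_sqrt hE40
      have e4 := Real.sq_sqrt hK0
      have f1 : D + R + E ≤ (√D + √R + √E)^2 := by
        have : 0 ≤ √D * √R + √D * √E + √R * √E := by positivity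
        nlinarith
      have f2 : 4 + K ≤ (2 + √K)^2 := by nlinarith [Real.sqrt_nonneg K]
      calc _ ≤ (4 + K) * (D + R + E) := by
            nlinarith [mul_nonneg hK0 hD0, mul_nonneg hK0 hC0]
        _ ≤ (2 + √K)^2 * (√D + √R + √E)^2 := by gcongr
        _ = _ := by ring
    have : 0 ≤ 2 * S * (1 + K) * (√D + √R + √E) := by positivity
    linarith

end MHD
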